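/- Let μ be a crystalline measure on ℝ with uniformly discrete support and uniformly discrete spectrum. Then there exist a lattice L = αℤ with α > 0, finitely many real numbers λ_1, …, λ_J, and trigonometric polynomials P_1, …, P_J such that μ = Σ_{j=1}^J Σ_{λ ∈ λ_j + L} P_j(λ) δ_λ; in particular, supp μ is contained in a finite union of translates of the single lattice L. -/

import Mathlib

open MeasureTheory SchwartzMap Metric Set
open scoped Pointwise ENNReal NNReal

noncomputable section

/-- The space `S*(ℝ)` of tempered distributions on the real line. -/
abbrev TemperedDistR : Type := SchwartzMap ℝ ℂ →L[ℂ] ℂ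

/-- The Fourier transform of a tempered distribution on `ℝ`: `f̂(φ) = f(φ̂)`. -/
def fourierTDR (f : TemperedDistR) : TemperedDistR :=
  f.comp (fourierTransformCLM ℂ)

/-- The support of a tempered distribution on `ℝ`. -/
def tdSupportR (f : TemperedDistR) : Set ℝ :=
  {x | ∀ U : Set ℝ, IsOpen U → x ∈ U →
    ∃ φ : SchwartzMap ℝ ℂ, HasCompactSupport (⇑φ) ∧ tsupport (⇑φ) ⊆ U ∧ f φ ≠ 0}

/-- A set in `ℝ` is locally finite if its intersection with every ball is finite. -/
def LocFiniteR (A : Set ℝ) : Prop :=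
  ∀ (x : ℝ) (r : ℝ), (A ∩ Metric.ball x r).Finite

/-- A set in `ℝ` is uniformly discrete if distances between distinct points
are bounded below by a positive constant. -/
def UniformlyDiscreteR (A : Set ℝ) : Prop :=
  ∃ η > (0:ℝ), ∀ x ∈ A, ∀ y ∈ A, x ≠ y → η ≤ dist x y

/-- The exponential `e^{2πixw}`. -/
def e2piR (x w : ℝ) : ℂ :=
  Complex.exp (((2 * Real.pi * (x * w) : ℝ) : ℂ) * Complex.I)

/-- A trigonometric polynomial on `ℝ`: a finite sum `Σ c_ω e^{2πixω}`. -/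
def IsTrigPolyR (P : ℝ → ℂ) : Prop :=
  ∃ (n : ℕ) (cc : Fin n → ℂ) (w : Fin n → ℝ),
    ∀ x, P x = ∑ i, cc i * e2piR x (w i)

/-- The pure point measure `μ = Σ_λ a(λ) δ_λ` on `ℝ` belongs to `S*(ℝ)` and is
represented there by the tempered distribution `f`. -/
def RepMeasureR (a : ℝ → ℂ) (f : TemperedDistR) : Prop :=
  {x | a x ≠ 0}.Countable ∧
  (∀ φ : SchwartzMap ℝ ℂ, Summable fun lam => ‖a lam‖ * ‖φ lam‖) ∧
  (∀ φ : SchwartzMap ℝ ℂ, f φ = ∑' lam, a lam * φ lam)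

/-!
Write `μ = ∑ a(l) δ_l` and `μ̂ = ∑ b(s) δ_s`, so that Poisson's formula
`∑ a(l) 𝓕 φ(l) = ∑ b(s) φ(s)` holds on Schwartz functions. For a difference `h` of two points of
`supp a`, the measure with coefficients `a(l) * conj (a(l + h))` has its spectrum in
`supp b - supp b`, which omits an interval `(0, δ)` because `supp b` is uniformly discrete. A
nonzero measure with a spectral gap and bounded coefficients on a uniformly discrete set has
support of positive lower density, bounded below in terms of the gap and the separation only.
Every `h` therefore occurs as a difference in `supp a` with a density bounded below, and double
counting shows that `supp a - supp a` is locally finite; so is `supp b - supp b`, by duality.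
Local finiteness of the spectrum upgrades density to relative density: every difference `h` occurs
in each ball of some fixed radius `R`.

Such a set lies in finitely many cosets of a lattice. Its differences are finitely generated, so
they have integer coordinates `φ`, and each `φ` is at bounded distance from a linear function
`ℓ h`, by stability of additive maps. For one of them `ℓ ≠ 0`. Choosing `h` so that `φ h - ℓ h` is
almost maximal, all `l` with `l` and `l + h` in `supp a` have the same value of `φ l - ℓ l`, and
these `l` are relatively dense; hence `supp a` is finite modulo `1/ℓ`. Then `supp b` is finite
modulo `ℓ`, and Poisson's formula exhibits `a` on each coset as a finite sum of exponentials.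
-/

open Function Filter Topology
open scoped FourierTransform ComplexConjugate

/-! ### Characters and Schwartz functions -/

lemma e2piR_eq_fourierChar (x w : ℝ) : e2piR x w = 𝐞 (x * w) := rfl

lemma e2piR_comm (x w : ℝ) : e2piR x w = e2piR w x := by
  simp only [e2piR_eq_fourierChar, mul_comm]

lemma e2piR_add_right (x v w : ℝ) : e2piR x (v + w) = e2piR x v * e2piR x w := by
  simp only [e2piR_eq_fourierChar, mul_add, AddChar.map_add_eq_mul, Circle.coe_mul]

lemma e2piR_add_left (x y w : ℝ) : e2piR (x + y) w = e2piR x w * e2piR y w := by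
  simp only [e2piR_comm _ w, e2piR_add_right]

@[simp] lemma e2piR_zero_right (x : ℝ) : e2piR x 0 = 1 := by simp [e2piR_eq_fourierChar]

@[simp] lemma e2piR_zero_left (w : ℝ) : e2piR 0 w = 1 := by simp [e2piR_eq_fourierChar]

@[simp] lemma norm_e2piR (x w : ℝ) : ‖e2piR x w‖ = 1 := by
  rw [e2piR_eq_fourierChar, Circle.norm_coe]

lemma e2piR_neg_left (x w : ℝ) : e2piR (-x) w = e2piR x (-w) := by
  simp only [e2piR_eq_fourierChar, neg_mul, mul_neg]

lemma conj_e2piR (x w : ℝ) : conj (e2piR x w) = e2piR x (-w) := by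
  simp only [e2piR_eq_fourierChar, mul_neg, AddChar.map_neg_eq_inv, Circle.coe_inv_eq_conj]

lemma e2piR_int_mul (n : ℤ) (x w : ℝ) : e2piR (n * x) w = e2piR x w ^ n := by
  rw [e2piR_eq_fourierChar, mul_assoc, ← zsmul_eq_mul, AddChar.map_zsmul_eq_zpow, Circle.coe_zpow,
    ← e2piR_eq_fourierChar]

lemma continuous_e2piR (x : ℝ) : Continuous (e2piR x) := by
  unfold e2piR; fun_prop

lemma fourier_apply_eq_integral (ψ : 𝓢(ℝ, ℂ)) (y : ℝ) :
    𝓕 ψ y = ∫ t, e2piR t (-y) * ψ t := by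
  simp only [fourier_coe, Real.fourier_real_eq, e2piR_eq_fourierChar, mul_neg, Circle.smul_def,
    smul_eq_mul]

lemma fourierInv_apply_eq_fourier_neg (ψ : 𝓢(ℝ, ℂ)) (y : ℝ) : 𝓕⁻ ψ y = 𝓕 ψ (-y) := by
  rw [fourierInv_coe, Real.fourierInv_eq_fourier_neg, fourier_coe]

lemma fourier_fourier_apply (ψ : 𝓢(ℝ, ℂ)) (y : ℝ) : 𝓕 (𝓕 ψ) y = ψ (-y) := by
  rw [← neg_neg y, ← fourierInv_apply_eq_fourier_neg, FourierTransform.fourierInv_fourier_eq,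
    neg_neg]

lemma fourier_compSubConstCLM (s : ℝ) (ψ : 𝓢(ℝ, ℂ)) (y : ℝ) :
    𝓕 (compSubConstCLM ℂ s ψ) y = e2piR y (-s) * 𝓕 ψ y := by
  rw [fourier_apply_eq_integral, fourier_apply_eq_integral, ← integral_const_mul,
    ← integral_add_right_eq_self _ s]
  refine integral_congr_ae (.of_forall fun t => ?_)
  simp only [compSubConstCLM_apply, add_sub_cancel_right]
  rw [e2piR_add_left, e2piR_comm s, e2piR_neg_left]
  ring

/-- The modulation `t ↦ e^{2πixt} ψ(t)` of a Schwartz function. It is encoded through the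
translation of `𝓕⁻ ψ`, which makes it a Schwartz function for free. -/
def modulate (x : ℝ) (ψ : 𝓢(ℝ, ℂ)) : 𝓢(ℝ, ℂ) := 𝓕 (compSubConstCLM ℂ (-x) (𝓕⁻ ψ))

lemma modulate_apply (x : ℝ) (ψ : 𝓢(ℝ, ℂ)) (t : ℝ) : modulate x ψ t = e2piR x t * ψ t := by
  rw [modulate, fourier_compSubConstCLM, neg_neg, FourierTransform.fourier_fourierInv_eq,
    e2piR_comm]

lemma fourier_modulate (x : ℝ) (ψ : 𝓢(ℝ, ℂ)) (y : ℝ) : 𝓕 (modulate x ψ) y = 𝓕 ψ (y - x) := by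
  rw [modulate, fourier_fourier_apply, compSubConstCLM_apply, fourierInv_apply_eq_fourier_neg]
  congr 1; ring

lemma exists_schwartz_bump (x : ℝ) {r : ℝ} (hr : 0 < r) :
    ∃ u : 𝓢(ℝ, ℂ), u x = 1 ∧ (∀ y, r ≤ dist y x → u y = 0) ∧ (∀ y, ‖u y‖ ≤ 1) ∧ 𝓕 u 0 ≠ 0 := by
  let B : ContDiffBump x := ⟨r / 2, r, by positivity, by linarith⟩
  have hc : HasCompactSupport fun y => (B y : ℂ) :=
    B.hasCompactSupport.comp_left (g := fun t : ℝ => (t : ℂ)) Complex.ofReal_zero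
  let u : 𝓢(ℝ, ℂ) := hc.toSchwartzMap (Complex.ofRealCLM.contDiff.comp B.contDiff)
  have hu (y) : u y = B y := rfl
  refine ⟨u, ?_, fun y hy => ?_, fun y => ?_, ?_⟩
  · rw [hu, B.one_of_mem_closedBall (mem_closedBall_self (by positivity)), Complex.ofReal_one]
  · rw [hu, B.zero_of_le_dist hy, Complex.ofReal_zero]
  · rw [hu, Complex.norm_real, Real.norm_of_nonneg B.nonneg]
    exact B.le_one
  · have : 𝓕 u 0 = (∫ t, B t : ℝ) := by
      simp only [fourier_apply_eq_integral, hu, neg_zero, e2piR_zero_right, one_mul,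
        integral_complex_ofReal]
    rw [this]
    exact_mod_cast (B.integral_pos (μ := volume)).ne'

lemma exists_le_div_one_add_sq (φ : 𝓢(ℝ, ℂ)) : ∃ C > 0, ∀ x, ‖φ x‖ ≤ C / (1 + x ^ 2) := by
  obtain ⟨C₀, hC₀, h₀⟩ := φ.decay 0 0
  obtain ⟨C₂, hC₂, h₂⟩ := φ.decay 2 0
  refine ⟨C₀ + C₂, by positivity, fun x => ?_⟩
  have h₀ := h₀ x
  have h₂ := h₂ x
  simp only [norm_iteratedFDeriv_zero, pow_zero, one_mul, Real.norm_eq_abs, sq_abs] at h₀ h₂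
  rw [le_div_iff₀ (by positivity)]
  linarith

/-! ### Sums over uniformly discrete sets -/

lemma injOn_floor_of_separated {η : ℝ} (hη : 0 < η) {A : Set ℝ}
    (hA : A.Pairwise fun x y => η ≤ dist x y) (x : ℝ) : InjOn (fun l => ⌊(l - x) / η⌋) A := by
  intro l hl l' hl' h
  by_contra hne
  have hlt := Int.abs_sub_lt_one_of_floor_eq_floor h
  rw [← sub_div, sub_sub_sub_cancel_right, abs_div, abs_of_pos hη, div_lt_one hη] at hlt
  exact (hA hl hl' hne).not_gt hlt

lemma summable_int_one_div_one_add_sq : Summable fun j : ℤ => 1 / (1 + (j : ℝ) ^ 2) := by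
  refine (Real.summable_one_div_int_pow (p := 2).2 (by norm_num)).of_norm_bounded_eventually ?_
  filter_upwards [(finite_singleton (0 : ℤ)).compl_mem_cofinite] with j hj
  have hj0 : (j : ℝ) ≠ 0 := by simpa using hj
  rw [Real.norm_of_nonneg (by positivity)]
  exact one_div_le_one_div_of_le (by positivity) (by linarith)

lemma one_div_one_add_sq_le_floor {η : ℝ} (hη : 0 < η) (y : ℝ) :
    1 / (1 + y ^ 2) ≤ (3 + 2 / η ^ 2) * (1 / (1 + (⌊y / η⌋ : ℝ) ^ 2)) := by
  obtain ⟨z, rfl⟩ : ∃ z, y = z * η := ⟨y / η, by field_simp⟩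
  rw [mul_div_cancel_right₀ _ hη.ne', mul_one_div, div_le_div_iff₀ (by positivity) (by positivity)]
  have hle := Int.floor_le z
  have hlt := Int.lt_floor_add_one z
  have hfloor : (⌊z⌋ : ℝ) ^ 2 ≤ 2 * z ^ 2 + 2 := by nlinarith [sq_nonneg (2 * z - ⌊z⌋)]
  have hexpand : (3 + 2 / η ^ 2) * (1 + (z * η) ^ 2) =
      3 + 2 / η ^ 2 + 3 * (z * η) ^ 2 + 2 * z ^ 2 := by field_simp; ring
  have : 0 ≤ 2 / η ^ 2 := by positivity
  nlinarith [sq_nonneg (z * η)]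

/- The constant depends on the separation only, so that it serves all correlations at once. -/
lemma exists_tsum_norm_le_of_separated {η : ℝ} (hη : 0 < η) :
    ∃ K > 0, ∀ g : ℝ → ℂ, (support g).Pairwise (fun x y => η ≤ dist x y) → ∀ x M,
      (∀ l, ‖g l‖ ≤ M * (1 / (1 + (l - x) ^ 2))) →
      Summable (fun l => ‖g l‖) ∧ ∑' l, ‖g l‖ ≤ M * K := by
  have hK₀ : 0 < ∑' j : ℤ, 1 / (1 + (j : ℝ) ^ 2) :=
    summable_int_one_div_one_add_sq.tsum_pos (fun _ => by positivity) 0 (by simp)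
  refine ⟨(3 + 2 / η ^ 2) * ∑' j : ℤ, 1 / (1 + (j : ℝ) ^ 2), by positivity, ?_⟩
  intro g hsep x M hg
  have hM : 0 ≤ M := by simpa using (norm_nonneg _).trans (hg x)
  have hi : Injective fun l : support g => ⌊((l : ℝ) - x) / η⌋ :=
    injOn_iff_injective.1 (injOn_floor_of_separated hη hsep x)
  have hw : Summable fun j : ℤ => M * ((3 + 2 / η ^ 2) * (1 / (1 + (j : ℝ) ^ 2))) :=
    (summable_int_one_div_one_add_sq.mul_left _).mul_left _
  have hgw (l : support g) :
      ‖g l‖ ≤ M * ((3 + 2 / η ^ 2) * (1 / (1 + (⌊((l : ℝ) - x) / η⌋ : ℝ) ^ 2))) :=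
    (hg l).trans (mul_le_mul_of_nonneg_left (one_div_one_add_sq_le_floor hη _) hM)
  have hsum : Summable fun l : support g => ‖g l‖ :=
    .of_nonneg_of_le (fun _ => norm_nonneg _) hgw (hw.comp_injective hi)
  have hle : ∑' l : support g, ‖g l‖ ≤
      ∑' j : ℤ, M * ((3 + 2 / η ^ 2) * (1 / (1 + (j : ℝ) ^ 2))) :=
    hsum.tsum_le_tsum_of_inj _ hi (fun _ _ => by positivity) hgw hw
  have hsupp : support (fun l => ‖g l‖) = support g := by
    ext l; simp
  have hind : (support g).indicator (fun l => ‖g l‖) = fun l => ‖g l‖ :=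
    indicator_eq_self.2 hsupp.subset
  rw [tsum_mul_left, tsum_mul_left, tsum_subtype (support g) fun l => ‖g l‖, hind] at hle
  exact ⟨hind ▸ summable_subtype_iff_indicator.1 hsum, hle⟩

lemma finite_inter_closedBall_and_ncard_le {η : ℝ} (hη : 0 < η) {A : Set ℝ}
    (hA : A.Pairwise fun x y => η ≤ dist x y) (x : ℝ) {T : ℝ} (hT : 0 ≤ T) :
    (A ∩ closedBall x T).Finite ∧ ((A ∩ closedBall x T).ncard : ℝ) ≤ 2 * T / η + 1 := by
  have hinj : InjOn (fun l => ⌊(l - (x - T)) / η⌋) (A ∩ closedBall x T) :=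
    (injOn_floor_of_separated hη hA (x - T)).mono inter_subset_left
  have hmaps : MapsTo (fun l => ⌊(l - (x - T)) / η⌋) (A ∩ closedBall x T)
      (Finset.Icc 0 ⌊2 * T / η⌋) := by
    rintro l ⟨-, hl⟩
    have := abs_le.1 (mem_closedBall.1 hl)
    rw [Finset.mem_coe, Finset.mem_Icc]
    refine ⟨Int.floor_nonneg.2 (div_nonneg (by linarith) hη.le), ?_⟩
    exact Int.floor_le_floor (div_le_div_of_nonneg_right (by linarith) hη.le)
  refine ⟨.of_finite_image ((Finset.finite_toSet _).subset hmaps.image_subset) hinj, ?_⟩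
  have hcard := ncard_le_ncard_of_injOn _ hmaps hinj (Finset.finite_toSet _)
  have hfloor : 0 ≤ ⌊2 * T / η⌋ := Int.floor_nonneg.2 (by positivity)
  rw [ncard_coe_finset, Int.card_Icc, ← Int.ofNat_le, Int.toNat_of_nonneg (by omega)] at hcard
  calc ((A ∩ closedBall x T).ncard : ℝ) ≤ (⌊2 * T / η⌋ + 1 - 0 : ℤ) := by exact_mod_cast hcard
    _ ≤ 2 * T / η + 1 := by push_cast; linarith [Int.floor_le (2 * T / η)]

lemma UniformlyDiscreteR.locFiniteR {A : Set ℝ} (hA : UniformlyDiscreteR A) : LocFiniteR A := by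
  obtain ⟨η, hη, hsep⟩ := hA
  intro x r
  refine (finite_inter_closedBall_and_ncard_le hη hsep x (le_max_right r 0)).1.subset ?_
  exact inter_subset_inter_right _ (ball_subset_closedBall.trans
    (closedBall_subset_closedBall (le_max_left r 0)))

/-! ### Poisson pairs and spectra -/

/-- Coefficients of two pure point measures `∑ a(l) δ_l` and `∑ b(s) δ_s` that act on Schwartz
functions and of which the second is the Fourier transform of the first. -/
structure IsPoissonPair (a b : ℝ → ℂ) : Prop where
  summable_left (φ : 𝓢(ℝ, ℂ)) : Summable fun l => ‖a l‖ * ‖φ l‖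
  summable_right (φ : 𝓢(ℝ, ℂ)) : Summable fun s => ‖b s‖ * ‖φ s‖
  tsum_fourier (φ : 𝓢(ℝ, ℂ)) : ∑' l, a l * 𝓕 φ l = ∑' s, b s * φ s

/-- The spectrum of the measure `∑ c(l) δ_l` is contained in `D`, tested on Schwartz functions
vanishing on `D` (no neighbourhood of `D` is involved, as `D` is discrete in the applications). -/
def SpectrumIn (c : ℝ → ℂ) (D : Set ℝ) : Prop :=
  ∀ ψ : 𝓢(ℝ, ℂ), (∀ t ∈ D, ψ t = 0) → ∑' l, c l * 𝓕 ψ l = 0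

/-- The coefficients of the measure `∑ a(l) conj(a(l + h)) δ_l`. -/
def correlation (a : ℝ → ℂ) (h l : ℝ) : ℂ := a l * conj (a (l + h))

lemma support_correlation (a : ℝ → ℂ) (h : ℝ) :
    support (correlation a h) = support a ∩ (· + h) ⁻¹' support a :=
  ext fun _ => by simp [correlation]

lemma support_correlation_subset (a : ℝ → ℂ) (h : ℝ) : support (correlation a h) ⊆ support a :=
  (support_correlation a h).trans_subset inter_subset_left

lemma norm_correlation_le {a : ℝ → ℂ} {C : ℝ} (hC : ∀ x, ‖a x‖ ≤ C) (h l : ℝ) :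
    ‖correlation a h l‖ ≤ C * C := by
  rw [correlation, norm_mul, RCLike.norm_conj]
  exact mul_le_mul (hC _) (hC _) (norm_nonneg _) ((norm_nonneg _).trans (hC 0))

lemma SpectrumIn.tsum_fourier_sub {c : ℝ → ℂ} {D : Set ℝ} (hc : SpectrumIn c D) {ψ : 𝓢(ℝ, ℂ)}
    (hψ : ∀ t ∈ D, ψ t = 0) (x : ℝ) : ∑' l, c l * 𝓕 ψ (l - x) = 0 := by
  have := hc (modulate x ψ) fun t ht => by rw [modulate_apply, hψ t ht, mul_zero]
  simpa only [fourier_modulate] using this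

lemma exists_schwartz_seq_tendsto_indicator_zero :
    ∃ u : ℕ → 𝓢(ℝ, ℂ), (∀ n, u n 0 = 1) ∧ (∀ n y, ‖u n y‖ ≤ 2 * (1 / (1 + y ^ 2))) ∧
      ∀ y ≠ 0, ∀ᶠ n in atTop, u n y = 0 := by
  choose u hu0 hu hu1 _ using fun n : ℕ =>
    exists_schwartz_bump 0 (Nat.one_div_pos_of_nat (α := ℝ) (n := n))
  refine ⟨u, hu0, fun n y => ?_, fun y hy => ?_⟩
  · rw [mul_one_div, le_div_iff₀ (by positivity)]
    rcases le_or_gt 1 |y| with hy | hy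
    · rw [hu n y, norm_zero, zero_mul]
      · exact zero_le_two
      · rw [Real.dist_0_eq_abs, div_le_iff₀ (by positivity)]
        nlinarith [Nat.cast_nonneg (α := ℝ) n]
    · nlinarith [hu1 n y, sq_lt_one_iff_abs_lt_one y |>.2 hy]
  · filter_upwards [tendsto_one_div_add_atTop_nhds_zero_nat.eventually_le_const (dist_pos.2 hy)]
      with n hn
    exact hu n y hn

namespace IsPoissonPair

variable {a b : ℝ → ℂ}

lemma dual (hab : IsPoissonPair a b) : IsPoissonPair b fun x => a (-x) where
  summable_left := hab.summable_right
  summable_right φ := by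
    have := (Equiv.neg ℝ).summable_iff.2 (hab.summable_left (𝓕 (𝓕 φ)))
    simpa only [comp_def, Equiv.neg_apply, fourier_fourier_apply, neg_neg] using this
  tsum_fourier φ := by
    rw [← hab.tsum_fourier, ← (Equiv.neg ℝ).tsum_eq]
    simp only [Equiv.neg_apply, fourier_fourier_apply, neg_neg]

lemma tsum_fourier_sub (hab : IsPoissonPair a b) (ψ : 𝓢(ℝ, ℂ)) (x : ℝ) :
    ∑' l, a l * 𝓕 ψ (l - x) = ∑' s, b s * (e2piR x s * ψ s) := by
  simpa only [fourier_modulate, modulate_apply] using hab.tsum_fourier (modulate x ψ)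

lemma tsum_e2piR_mul_fourier (hab : IsPoissonPair a b) (ψ : 𝓢(ℝ, ℂ)) (s : ℝ) :
    ∑' l, a l * (e2piR l (-s) * 𝓕 ψ l) = ∑' t, b t * ψ (t - s) := by
  simpa only [fourier_compSubConstCLM, compSubConstCLM_apply]
    using hab.tsum_fourier (compSubConstCLM ℂ s ψ)

lemma exists_norm_le (hab : IsPoissonPair a b) (ha : UniformlyDiscreteR (support a)) :
    ∃ C, ∀ x, ‖a x‖ ≤ C := by
  obtain ⟨η, hη, hsep⟩ := ha
  obtain ⟨u, hu0, hu, -, -⟩ := exists_schwartz_bump 0 hη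
  refine ⟨∑' s, ‖b s‖ * ‖𝓕⁻ u s‖, fun x => ?_⟩
  rcases eq_or_ne (a x) 0 with hx | hx
  · rw [hx, norm_zero]
    exact tsum_nonneg fun s => by positivity
  have hsingle : ∑' l, a l * u (l - x) = a x := by
    rw [tsum_eq_single x, sub_self, hu0, mul_one]
    intro l hl
    rcases eq_or_ne (a l) 0 with hal | hal
    · rw [hal, zero_mul]
    · rw [hu _ (by simpa [Real.dist_eq] using hsep l hal x hx hl), mul_zero]
  have hpoisson := hab.tsum_fourier_sub (𝓕⁻ u) x
  rw [FourierTransform.fourier_fourierInv_eq, hsingle] at hpoisson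
  rw [hpoisson]
  have hnorm (s : ℝ) : ‖b s * (e2piR x s * 𝓕⁻ u s)‖ = ‖b s‖ * ‖𝓕⁻ u s‖ := by
    rw [norm_mul, norm_mul, norm_e2piR, one_mul]
  refine (norm_tsum_le_tsum_norm ?_).trans_eq (tsum_congr hnorm)
  simpa only [hnorm] using hab.summable_right (𝓕⁻ u)

lemma exists_bounded_approx (hab : IsPoissonPair a b) (ha : UniformlyDiscreteR (support a)) :
    ∃ (C : ℝ) (w : ℕ → 𝓢(ℝ, ℂ)), (∀ n x, ‖∑' s, b s * (e2piR x s * w n s)‖ ≤ C) ∧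
      ∀ x, Tendsto (fun n => ∑' s, b s * (e2piR x s * w n s)) atTop (𝓝 (a x)) := by
  obtain ⟨A, hA⟩ := hab.exists_norm_le ha
  have hA0 : 0 ≤ A := (norm_nonneg _).trans (hA 0)
  obtain ⟨η, hη, hsep⟩ := ha
  obtain ⟨K, -, hK⟩ := exists_tsum_norm_le_of_separated hη
  obtain ⟨u, hu0, hdecay, hu⟩ := exists_schwartz_seq_tendsto_indicator_zero
  have hterm (n : ℕ) (x l : ℝ) : ‖a l * u n (l - x)‖ ≤ A * 2 * (1 / (1 + (l - x) ^ 2)) := by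
    rw [norm_mul, mul_assoc]
    exact mul_le_mul (hA l) (hdecay n _) (norm_nonneg _) hA0
  have hpoisson (n : ℕ) (x : ℝ) :
      ∑' s, b s * (e2piR x s * 𝓕⁻ (u n) s) = ∑' l, a l * u n (l - x) := by
    rw [← hab.tsum_fourier_sub, FourierTransform.fourier_fourierInv_eq]
  have hsupp (f : ℝ → ℂ) : (support fun l => a l * f l).Pairwise fun y z => η ≤ dist y z :=
    Set.Pairwise.mono (support_mul_subset_left _ _) hsep
  refine ⟨A * 2 * K, fun n => 𝓕⁻ (u n), fun n x => ?_, fun x => ?_⟩ <;> simp only [hpoisson]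
  · have := hK _ (hsupp fun l => u n (l - x)) x _ (hterm n x)
    exact (norm_tsum_le_tsum_norm this.1).trans this.2
  · have hlim (l : ℝ) : Tendsto (fun n => a l * u n (l - x)) atTop
        (𝓝 (if l = x then a x else 0)) := by
      split_ifs with hl
      · simp only [hl, sub_self, hu0, mul_one, tendsto_const_nhds]
      refine tendsto_const_nhds.congr' ?_
      filter_upwards [hu _ (sub_ne_zero.2 hl)] with n hn
      rw [hn, mul_zero]
    rw [← tsum_ite_eq x fun _ => a x]
    refine tendsto_tsum_of_dominated_convergence
      (bound := fun l => ‖a l * (2 * (1 / (1 + (l - x) ^ 2)) : ℝ)‖) ?_ hlim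
      (.of_forall fun n l => ?_)
    · refine (hK _ (hsupp _) x (A * 2) fun l => ?_).1
      rw [norm_mul, mul_assoc, Complex.norm_of_nonneg (by positivity)]
      exact mul_le_mul_of_nonneg_right (hA l) (by positivity)
    · rw [norm_mul, norm_mul, Complex.norm_of_nonneg (by positivity)]
      exact mul_le_mul_of_nonneg_left (hdecay n _) (norm_nonneg _)

lemma tsum_conj_eq_zero (hab : IsPoissonPair a b) {ψ : 𝓢(ℝ, ℂ)}
    (hψ : ∀ t ∈ support b - support b, ψ t = 0) (h : ℝ) (w : 𝓢(ℝ, ℂ)) :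
    ∑' l, a l * 𝓕 ψ l * conj (∑' s, b s * (e2piR (l + h) s * w s)) = 0 := by
  have hexpand (l : ℝ) : a l * 𝓕 ψ l * conj (∑' s, b s * (e2piR (l + h) s * w s)) =
      ∑' s, conj (b s * (e2piR h s * w s)) * (a l * (e2piR l (-s) * 𝓕 ψ l)) := by
    rw [Complex.conj_tsum, ← tsum_mul_left]
    congr 1 with s
    simp only [e2piR_add_left, map_mul, conj_e2piR]
    ring
  have hsum : Summable (uncurry fun l s =>
      conj (b s * (e2piR h s * w s)) * (a l * (e2piR l (-s) * 𝓕 ψ l))) := by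
    have := (hab.summable_left (𝓕 ψ)).mul_of_nonneg (hab.summable_right w)
      (fun _ => by positivity) (fun _ => by positivity)
    refine .of_norm (this.congr fun p => ?_)
    simp only [uncurry, norm_mul, RCLike.norm_conj, norm_e2piR, one_mul]
    ring
  have hinner (s : ℝ) : conj (b s * (e2piR h s * w s)) *
      ∑' l, a l * (e2piR l (-s) * 𝓕 ψ l) = 0 := by
    rcases eq_or_ne (b s) 0 with hs | hs
    · simp only [hs, zero_mul, map_zero]
    have hzero (t : ℝ) : b t * ψ (t - s) = 0 := by
      rcases eq_or_ne (b t) 0 with ht | ht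
      · rw [ht, zero_mul]
      · rw [hψ _ (sub_mem_sub ht hs), mul_zero]
    simp only [hab.tsum_e2piR_mul_fourier, hzero, tsum_zero, mul_zero]
  simp only [hexpand]
  rw [← hsum.tsum_comm]
  simp only [tsum_mul_left, hinner, tsum_zero]

lemma spectrumIn_correlation (hab : IsPoissonPair a b) (ha : UniformlyDiscreteR (support a))
    (h : ℝ) : SpectrumIn (correlation a h) (support b - support b) := by
  intro ψ hψ
  obtain ⟨C, w, hbound, hlim⟩ := hab.exists_bounded_approx ha
  refine tendsto_nhds_unique (l := atTop) (tendsto_tsum_of_dominated_convergence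
    ((hab.summable_left (𝓕 ψ)).mul_right C)
    (f := fun n l => a l * 𝓕 ψ l * conj (∑' s, b s * (e2piR (l + h) s * w n s)))
    (fun l => ?_) (.of_forall fun n l => ?_)) ?_
  · rw [correlation, mul_right_comm]
    exact ((Complex.continuous_conj.tendsto _).comp (hlim (l + h))).const_mul _
  · rw [norm_mul, norm_mul, RCLike.norm_conj]
    exact mul_le_mul_of_nonneg_left (hbound n _) (by positivity)
  · simp only [hab.tsum_conj_eq_zero hψ, tendsto_const_nhds]

end IsPoissonPair

/-! ### A spectral gap forces positive density -/

lemma summable_norm_mul_of_bounded {G P : ℝ → ℂ} {B : ℝ} (hP : ∀ y, ‖P y‖ ≤ B)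
    (hG : Summable fun y => ‖G y‖) : Summable fun y => ‖P y * G y‖ :=
  .of_nonneg_of_le (fun _ => norm_nonneg _)
    (fun y => (norm_mul_le _ _).trans (mul_le_mul_of_nonneg_right (hP y) (norm_nonneg _)))
    (hG.mul_left B)

/-- The finite measure `∑ G(y) δ_y` has a Fourier transform vanishing on `[-σ, 0]`; the sign is
chosen so that no minus signs occur in the exponentials. -/
structure FourierVanishesOn (G : ℝ → ℂ) (σ : ℝ) : Prop where
  summable_norm : Summable fun y => ‖G y‖
  tsum_eq_zero {s : ℝ} (hs : s ∈ Icc 0 σ) : ∑' y, G y * e2piR y s = 0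

/-- The mean value of `e2piR y` over `[0, t]`. -/
def meanE2piR (t y : ℝ) : ℂ := (t : ℂ)⁻¹ * ∫ r in (0 : ℝ)..t, e2piR y r

lemma norm_meanE2piR_le_one {t : ℝ} (ht : 0 < t) (y : ℝ) : ‖meanE2piR t y‖ ≤ 1 := by
  have hint : ‖∫ r in (0 : ℝ)..t, e2piR y r‖ ≤ 1 * |t - 0| :=
    intervalIntegral.norm_integral_le_of_norm_le_const fun r _ => (norm_e2piR y r).le
  rw [sub_zero, abs_of_pos ht, one_mul] at hint
  rwa [meanE2piR, norm_mul, norm_inv, Complex.norm_of_nonneg ht.le, inv_mul_le_iff₀ ht, mul_one]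

lemma meanE2piR_zero {t : ℝ} (ht : 0 < t) : meanE2piR t 0 = 1 := by
  have : (t : ℂ) ≠ 0 := Complex.ofReal_ne_zero.2 ht.ne'
  simp [meanE2piR, this]

lemma norm_meanE2piR_le {t y : ℝ} (ht : 0 < t) (hy : y ≠ 0) : ‖meanE2piR t y‖ ≤ 1 / (t * |y|) := by
  have hc : ((2 * Real.pi * y : ℝ) : ℂ) * Complex.I ≠ 0 :=
    mul_ne_zero (Complex.ofReal_ne_zero.2 (by positivity)) Complex.I_ne_zero
  have hexp (r : ℝ) : e2piR y r = Complex.exp (((2 * Real.pi * y : ℝ) : ℂ) * Complex.I * r) := by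
    rw [e2piR]
    push_cast
    ring_nf
  have hint : ∫ r in (0 : ℝ)..t, e2piR y r =
      (e2piR y t - 1) / (((2 * Real.pi * y : ℝ) : ℂ) * Complex.I) := by
    simp only [hexp, integral_exp_mul_complex hc, Complex.ofReal_zero, mul_zero, Complex.exp_zero]
  have hnum : ‖e2piR y t - 1‖ ≤ 2 := by
    refine (norm_sub_le _ _).trans ?_
    rw [norm_e2piR, norm_one]
    norm_num
  have hden : 2 * |y| ≤ ‖((2 * Real.pi * y : ℝ) : ℂ) * Complex.I‖ := by
    rw [norm_mul, Complex.norm_I, mul_one, Complex.norm_real, Real.norm_eq_abs, abs_mul,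
      abs_of_pos Real.two_pi_pos]
    nlinarith [Real.pi_gt_three, abs_nonneg y]
  have : 0 < |y| := abs_pos.2 hy
  rw [meanE2piR, hint, norm_mul, norm_inv, Complex.norm_of_nonneg ht.le, norm_div]
  calc t⁻¹ * (‖e2piR y t - 1‖ / ‖((2 * Real.pi * y : ℝ) : ℂ) * Complex.I‖)
      ≤ t⁻¹ * (2 / (2 * |y|)) := by gcongr
    _ = 1 / (t * |y|) := by field_simp

namespace FourierVanishesOn

variable {G : ℝ → ℂ} {σ : ℝ}

lemma tsum_zero (hG : FourierVanishesOn G σ) (hσ : 0 ≤ σ) : ∑' y, G y = 0 := by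
  simpa using hG.tsum_eq_zero (left_mem_Icc.2 hσ)

lemma mul_e2piR_sub {t : ℝ} (hG : FourierVanishesOn G (σ + t)) (ht : 0 ≤ t) (z : ℂ) :
    FourierVanishesOn (fun y => (e2piR y t - z) * G y) σ where
  summable_norm := summable_norm_mul_of_bounded (B := 1 + ‖z‖)
    (fun y => (norm_sub_le _ _).trans_eq (by rw [norm_e2piR])) hG.summable_norm
  tsum_eq_zero {s} hs := by
    have hsum (s : ℝ) : Summable fun y => G y * e2piR y s := by
      refine .of_norm ?_
      simpa only [norm_mul, norm_e2piR, mul_one] using hG.summable_norm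
    have hexpand (y : ℝ) : (e2piR y t - z) * G y * e2piR y s =
        G y * e2piR y (s + t) - z * (G y * e2piR y s) := by
      rw [e2piR_add_right]
      ring
    simp only [hexpand]
    rw [(hsum _).tsum_sub ((hsum s).mul_left z), tsum_mul_left,
      hG.tsum_eq_zero ⟨by linarith [hs.1], by linarith [hs.2]⟩,
      hG.tsum_eq_zero ⟨hs.1, by linarith [hs.2]⟩, mul_zero, sub_zero]

lemma mul_prod {F : Finset ℝ} {T : ℝ → ℝ} (hT : ∀ k, 0 ≤ T k)
    (hG : FourierVanishesOn G (σ + ∑ k ∈ F, T k)) :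
    FourierVanishesOn (fun y => (∏ k ∈ F, (e2piR y (T k) - e2piR k (T k))) * G y) σ := by
  induction F using Finset.induction_on generalizing σ with
  | empty => simpa using hG
  | insert x F hx ih =>
    rw [Finset.sum_insert hx, ← add_assoc] at hG
    simpa only [Finset.prod_insert hx, mul_assoc] using (ih hG).mul_e2piR_sub (hT x) (e2piR x (T x))

lemma mul_meanE2piR {t : ℝ} (hG : FourierVanishesOn G (σ + t)) (ht : 0 < t) :
    FourierVanishesOn (fun y => meanE2piR t y * G y) σ where
  summable_norm := summable_norm_mul_of_bounded (norm_meanE2piR_le_one ht) hG.summable_norm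
  tsum_eq_zero {s} hs := by
    -- The interchange of sum and integral needs a countable index type.
    have hcount : Countable (support G) :=
      (hG.summable_norm.countable_support.mono fun _ hy => norm_ne_zero_iff.2 hy).to_subtype
    have hrestrict (H : ℝ → ℂ) : ∑' y : support G, G y * H y = ∑' y, G y * H y :=
      tsum_subtype_eq_of_support_subset (f := fun y => G y * H y) (support_mul_subset_left _ _)
    have hterm (y : ℝ) : meanE2piR t y * G y * e2piR y s =
        G y * ((t : ℂ)⁻¹ * ∫ r in (0 : ℝ)..t, e2piR y (s + r)) := by
      simp only [meanE2piR, e2piR_add_right, intervalIntegral.integral_const_mul]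
      ring
    have hnorm (y r : ℝ) : ‖G y * e2piR y (s + r)‖ = ‖G y‖ := by rw [norm_mul, norm_e2piR, mul_one]
    have hsum : Summable fun y : support G => ‖G y‖ := hG.summable_norm.subtype _
    have hswap : HasSum (fun y : support G => ∫ r in (0 : ℝ)..t, G y * e2piR y (s + r))
        (∫ r in (0 : ℝ)..t, ∑' y : support G, G y * e2piR y (s + r)) :=
      intervalIntegral.hasSum_integral_of_dominated_convergence (fun y _ => ‖G y‖)
        (fun y => (continuous_const.mul ((continuous_e2piR y).comp
          (continuous_const_add s))).aestronglyMeasurable)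
        (fun y => .of_forall fun r _ => (hnorm y r).le)
        (.of_forall fun r _ => hsum) intervalIntegrable_const
        (.of_forall fun r _ => (Summable.of_norm (by simpa only [hnorm] using hsum)).hasSum)
    have hvanish : ∀ r ∈ uIcc 0 t, ∑' y : support G, G y * e2piR y (s + r) = 0 := by
      intro r hr
      rw [uIcc_of_le ht.le] at hr
      rw [hrestrict fun y => e2piR y (s + r)]
      exact hG.tsum_eq_zero ⟨by linarith [hs.1, hr.1], by linarith [hs.2, hr.2]⟩
    rw [intervalIntegral.integral_congr hvanish, intervalIntegral.integral_zero] at hswap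
    simp only [intervalIntegral.integral_const_mul] at hswap
    simp only [hterm]
    rw [← hrestrict]
    simp only [mul_left_comm _ (t : ℂ)⁻¹, tsum_mul_left, hswap.tsum_eq, mul_zero]

lemma mul_meanE2piR_pow {t : ℝ} (ht : 0 < t) {m : ℕ} (hG : FourierVanishesOn G (σ + m * t)) :
    FourierVanishesOn (fun y => meanE2piR t y ^ m * G y) σ := by
  induction m generalizing σ with
  | zero => simpa using hG
  | succ m ih =>
    have hG' : FourierVanishesOn G (σ + t + m * t) := by
      convert hG using 1
      push_cast
      ring
    simpa only [pow_succ', mul_assoc] using (ih hG').mul_meanE2piR ht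

end FourierVanishesOn

lemma factorial_card_le_prod_min (n : ℕ) (J : Finset ℕ) (hJ : ∀ j ∈ J, 1 ≤ j) (hn : J.card ≤ n) :
    J.card.factorial ≤ ∏ j ∈ J, min j n := by
  induction J using Finset.induction_on_max with
  | empty => simp
  | insert x J hx ih =>
    have hxJ : x ∉ J := fun h => lt_irrefl _ (hx x h)
    have hsub : insert x J ⊆ Finset.Icc 1 x := fun j hj =>
      Finset.mem_Icc.2 ⟨hJ j hj, (Finset.mem_insert.1 hj).elim le_of_eq fun h => (hx j h).le⟩
    have hcard := Finset.card_le_card hsub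
    rw [Finset.card_insert_of_notMem hxJ, Nat.card_Icc, Nat.add_sub_cancel] at hcard
    rw [Finset.card_insert_of_notMem hxJ] at hn ⊢
    rw [Finset.prod_insert hxJ, Nat.factorial_succ]
    exact Nat.mul_le_mul (le_min hcard hn)
      (ih (fun j hj => hJ j (Finset.mem_insert_of_mem hj)) (by omega))

lemma one_le_intEquivNat_floor_and_mul_le {η y : ℝ} (hη : 0 < η) (hy : η ≤ |y|) :
    1 ≤ Equiv.intEquivNat ⌊y / η⌋ ∧ η * Equiv.intEquivNat ⌊y / η⌋ ≤ 4 * |y| := by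
  have hle := Int.floor_le (y / η)
  have hlt := Int.lt_floor_add_one (y / η)
  rw [le_div_iff₀ hη] at hle
  rw [div_lt_iff₀ hη] at hlt
  rcases lt_or_ge y 0 with h | h
  · obtain ⟨n, hn⟩ := Int.eq_negSucc_of_lt_zero (Int.floor_lt.2 (by
      push_cast
      exact div_neg_of_neg_of_pos h hη))
    rw [abs_of_neg h] at hy ⊢
    rw [hn, Int.cast_negSucc] at hlt
    rw [hn]
    change 1 ≤ 2 * n + 1 ∧ η * (2 * n + 1 : ℕ) ≤ 4 * -y
    refine ⟨by omega, ?_⟩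
    push_cast at hlt ⊢
    linarith
  · obtain ⟨n, hn⟩ := Int.eq_ofNat_of_zero_le (Int.floor_nonneg.2 (div_nonneg h hη.le))
    rw [abs_of_nonneg h] at hy ⊢
    rw [hn, Int.cast_natCast] at hle hlt
    rw [hn]
    change 1 ≤ 2 * n ∧ η * (2 * n : ℕ) ≤ 4 * y
    have hn0 : n ≠ 0 := by
      rintro rfl
      norm_num at hlt
      linarith
    refine ⟨by omega, ?_⟩
    push_cast
    linarith

lemma factorial_card_le_prod_intEquivNat {η : ℝ} (hη : 0 < η) {F : Finset ℝ}
    (hF : (F : Set ℝ).Pairwise fun x y => η ≤ dist x y) (h0 : ∀ k ∈ F, η ≤ |k|) :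
    F.card.factorial ≤ ∏ k ∈ F, min (Equiv.intEquivNat ⌊k / η⌋) F.card := by
  have hinj : InjOn (fun k => Equiv.intEquivNat ⌊k / η⌋) (F : Set ℝ) := by
    simpa only [sub_zero, comp_def] using
      Equiv.intEquivNat.injective.comp_injOn (injOn_floor_of_separated hη hF 0)
  have := factorial_card_le_prod_min F.card (F.image fun k => Equiv.intEquivNat ⌊k / η⌋)
    (Finset.forall_mem_image.2 fun k hk => (one_le_intEquivNat_floor_and_mul_le hη (h0 k hk)).1)
    Finset.card_image_le
  rwa [Finset.card_image_of_injOn hinj, Finset.prod_image hinj] at this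

lemma pow_self_le_three_pow_mul_factorial (n : ℕ) : (n : ℝ) ^ n ≤ 3 ^ n * n.factorial := by
  have hexp : Real.exp n ≤ 3 ^ n := by
    rw [← mul_one (n : ℝ), Real.exp_nat_mul]
    exact pow_le_pow_left₀ (Real.exp_pos _).le (by linarith [Real.exp_one_lt_d9]) n
  have := Real.pow_div_factorial_le_exp (x := n) n.cast_nonneg n
  rw [div_le_iff₀ (by positivity)] at this
  exact this.trans (by gcongr)

lemma four_mul_abs_le_norm_one_sub_e2piR {y t : ℝ} (h : |y * t| ≤ 1 / 2) :
    4 * |y * t| ≤ ‖1 - e2piR y t‖ := by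
  have hnorm : ‖1 - e2piR y t‖ = 2 * |Real.sin (Real.pi * (y * t))| := by
    have := Complex.norm_exp_I_mul_ofReal_sub_one (2 * Real.pi * (y * t))
    rw [mul_comm Complex.I] at this
    rw [norm_sub_rev, e2piR, this, norm_mul, Real.norm_ofNat, Real.norm_eq_abs]
    congr 3
    ring
  have habs : |Real.pi * (y * t)| = Real.pi * |y * t| := by rw [abs_mul, abs_of_pos Real.pi_pos]
  have hsin := Real.mul_abs_le_abs_sin (x := Real.pi * (y * t))
    (by rw [habs]; nlinarith [Real.pi_pos])
  rw [habs, ← mul_assoc, div_mul_cancel₀ _ Real.pi_ne_zero] at hsin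
  linarith

/-- The frequency `t` of the factor `e2piR y t - e2piR k t` by which the mass at the node `k ∈ F` is
killed: small enough for these frequencies to have sum at most `σ / 2`, and for the factor not to
vanish at `y = 0`. -/
def nodeFrequency (σ : ℝ) (F : Finset ℝ) (k : ℝ) : ℝ := min (σ / (2 * F.card)) (1 / (2 * |k|))

lemma nodeFrequency_nonneg {σ : ℝ} (hσ : 0 < σ) (F : Finset ℝ) (k : ℝ) :
    0 ≤ nodeFrequency σ F k :=
  le_min (by positivity) (by positivity)

lemma sum_nodeFrequency_le {σ : ℝ} (hσ : 0 < σ) (F : Finset ℝ) :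
    ∑ k ∈ F, nodeFrequency σ F k ≤ σ / 2 := by
  rcases F.eq_empty_or_nonempty with rfl | hF
  · simpa using (half_pos hσ).le
  have hcard : (F.card : ℝ) ≠ 0 := by simpa using hF.ne_empty
  calc ∑ k ∈ F, nodeFrequency σ F k ≤ F.card • (σ / (2 * F.card)) :=
        Finset.sum_le_card_nsmul _ _ _ fun k _ => min_le_left _ _
    _ = σ / 2 := by rw [nsmul_eq_mul]; field_simp

lemma mul_min_le_norm_one_sub_e2piR {η σ : ℝ} (hη : 0 < η) (hσ : 0 < σ) {F : Finset ℝ} {k : ℝ}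
    (hF : F.Nonempty) (hk : η ≤ |k|) :
    min (σ * η / 2) 1 / F.card * (min (Equiv.intEquivNat ⌊k / η⌋) F.card : ℕ) ≤
      ‖1 - e2piR k (nodeFrequency σ F k)‖ := by
  have hk0 : 0 < |k| := hη.trans_le hk
  have hn : (0 : ℝ) < F.card := by exact_mod_cast hF.card_pos
  have hindex := (one_le_intEquivNat_floor_and_mul_le hη hk).2
  set j := Equiv.intEquivNat ⌊k / η⌋
  have habs : |k * nodeFrequency σ F k| = min (|k| * σ / (2 * F.card)) (1 / 2) := by
    rw [abs_mul, abs_of_nonneg (nodeFrequency_nonneg hσ F k), nodeFrequency,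
      mul_min_of_nonneg _ _ hk0.le]
    congr 1
    · ring
    · field_simp
  refine le_trans ?_ (four_mul_abs_le_norm_one_sub_e2piR (habs.trans_le (min_le_right _ _)))
  rw [habs, mul_min_of_nonneg _ _ zero_le_four, Nat.cast_min]
  refine le_min ?_ ?_
  · calc min (σ * η / 2) 1 / F.card * min (j : ℝ) F.card ≤ σ * η / 2 / F.card * j := by
          gcongr
          exacts [min_le_left _ _, min_le_left _ _]
      _ = σ / (2 * F.card) * (η * j) := by ring
      _ ≤ σ / (2 * F.card) * (4 * |k|) := by gcongr
      _ = 4 * (|k| * σ / (2 * F.card)) := by ring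
  · calc min (σ * η / 2) 1 / F.card * min (j : ℝ) F.card ≤ 1 / F.card * F.card := by
          gcongr
          exacts [min_le_right _ _, min_le_right _ _]
      _ ≤ 4 * (1 / 2) := by rw [one_div_mul_cancel hn.ne']; norm_num

lemma pow_card_le_prod_norm_one_sub_e2piR {η σ : ℝ} (hη : 0 < η) (hσ : 0 < σ) {F : Finset ℝ}
    (hF : (F : Set ℝ).Pairwise fun x y => η ≤ dist x y) (h0 : ∀ k ∈ F, η ≤ |k|) :
    (min (σ * η / 2) 1 / 3) ^ F.card ≤ ∏ k ∈ F, ‖1 - e2piR k (nodeFrequency σ F k)‖ := by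
  rcases F.eq_empty_or_nonempty with rfl | hne
  · simp
  have : (0 : ℝ) < F.card := by exact_mod_cast hne.card_pos
  set ρ := min (σ * η / 2) 1
  have hρ : 0 < ρ := lt_min (by positivity) one_pos
  calc (ρ / 3) ^ F.card = (ρ / (3 * F.card)) ^ F.card * (F.card : ℝ) ^ F.card := by
        rw [← mul_pow]; field_simp
    _ ≤ (ρ / (3 * F.card)) ^ F.card * (3 ^ F.card * F.card.factorial) := by
        gcongr; exact pow_self_le_three_pow_mul_factorial _
    _ = (ρ / F.card) ^ F.card * F.card.factorial := by
        rw [← mul_assoc, ← mul_pow]; field_simp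
    _ ≤ (ρ / F.card) ^ F.card *
          ∏ k ∈ F, ((min (Equiv.intEquivNat ⌊k / η⌋) F.card : ℕ) : ℝ) := by
        gcongr; exact_mod_cast factorial_card_le_prod_intEquivNat hη hF h0
    _ = ∏ k ∈ F, ρ / F.card * ((min (Equiv.intEquivNat ⌊k / η⌋) F.card : ℕ) : ℝ) := by
        rw [Finset.prod_mul_distrib, Finset.prod_const]
    _ ≤ ∏ k ∈ F, ‖1 - e2piR k (nodeFrequency σ F k)‖ :=
        Finset.prod_le_prod (fun _ _ => by positivity)
          fun k hk => mul_min_le_norm_one_sub_e2piR hη hσ hne (h0 k hk)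

/-- A multiplier that equals the nonzero number `∏ k ∈ F, (1 - e2piR k (nodeFrequency σ F k))` at
`0`, kills the nodes of `F`, and is small far from `0`. -/
def nodeMultiplier (σ : ℝ) (m : ℕ) (F : Finset ℝ) (y : ℝ) : ℂ :=
  meanE2piR (σ / (2 * m)) y ^ m *
    ∏ k ∈ F, (e2piR y (nodeFrequency σ F k) - e2piR k (nodeFrequency σ F k))

lemma nodeMultiplier_zero {σ : ℝ} (hσ : 0 < σ) {m : ℕ} (hm : 0 < m) (F : Finset ℝ) :
    nodeMultiplier σ m F 0 = ∏ k ∈ F, (1 - e2piR k (nodeFrequency σ F k)) := by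
  have : 0 < σ / (2 * m) := by positivity
  simp only [nodeMultiplier, meanE2piR_zero this, one_pow, one_mul, e2piR_zero_left]

lemma nodeMultiplier_of_mem {F : Finset ℝ} {k : ℝ} (hk : k ∈ F) (σ : ℝ) (m : ℕ) :
    nodeMultiplier σ m F k = 0 := by
  exact mul_eq_zero_of_right _ (Finset.prod_eq_zero hk (sub_self _))

lemma norm_nodeMultiplier_le {σ : ℝ} (hσ : 0 < σ) {m : ℕ} (hm : 0 < m) (F : Finset ℝ) {y : ℝ}
    (hy : 4 * m ≤ σ * |y|) : ‖nodeMultiplier σ m F y‖ ≤ (1 / 2) ^ m * 2 ^ F.card := by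
  have hm0 : (0 : ℝ) < m := by exact_mod_cast hm
  have ht : 0 < σ / (2 * m) := by positivity
  have hy0 : y ≠ 0 := by
    rintro rfl
    rw [abs_zero, mul_zero] at hy
    linarith
  have hmean : ‖meanE2piR (σ / (2 * m)) y‖ ≤ 1 / 2 := by
    refine (norm_meanE2piR_le ht hy0).trans (one_div_le_one_div_of_le two_pos ?_)
    rw [div_mul_eq_mul_div, le_div_iff₀ (by positivity)]
    linarith
  have hfactor (k : ℝ) :
      ‖e2piR y (nodeFrequency σ F k) - e2piR k (nodeFrequency σ F k)‖ ≤ 2 := by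
    refine (norm_sub_le _ _).trans_eq ?_
    rw [norm_e2piR, norm_e2piR, one_add_one_eq_two]
  rw [nodeMultiplier, norm_mul, norm_pow, norm_prod, ← Finset.prod_const]
  gcongr with k
  exact hfactor k

namespace FourierVanishesOn

variable {G : ℝ → ℂ} {σ : ℝ}

lemma mul_nodeMultiplier (hG : FourierVanishesOn G σ) (hσ : 0 < σ) {m : ℕ} (hm : 0 < m)
    (F : Finset ℝ) : FourierVanishesOn (fun y => nodeMultiplier σ m F y * G y) 0 := by
  have hG' : FourierVanishesOn G (0 + m * (σ / (2 * m)) + ∑ k ∈ F, nodeFrequency σ F k) := by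
    refine ⟨hG.summable_norm, fun {s} hs => hG.tsum_eq_zero ⟨hs.1, hs.2.trans ?_⟩⟩
    have : (m : ℝ) * (σ / (2 * m)) = σ / 2 := by field_simp
    linarith [sum_nodeFrequency_le hσ F]
  simpa only [nodeMultiplier, mul_assoc] using
    (hG'.mul_prod (nodeFrequency_nonneg hσ F)).mul_meanE2piR_pow (by positivity)

/- The nodes in `F` are killed, so that the value at `0` is balanced by the far masses alone. -/
lemma norm_nodeMultiplier_zero_mul_le (hG : FourierVanishesOn G σ) (hσ : 0 < σ) {m : ℕ}
    (hm : 0 < m) {F : Finset ℝ} (hfar : ∀ y ∉ F, y ≠ 0 → G y ≠ 0 → 4 * m ≤ σ * |y|) :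
    ‖nodeMultiplier σ m F 0‖ * ‖G 0‖ ≤ (1 / 2) ^ m * 2 ^ F.card * ∑' y, ‖G y‖ := by
  have hterm (y : ℝ) : ‖if y = 0 then 0 else nodeMultiplier σ m F y * G y‖ ≤
      (1 / 2) ^ m * 2 ^ F.card * ‖G y‖ := by
    split_ifs with hy
    · rw [norm_zero]; positivity
    rw [norm_mul]
    by_cases hyF : y ∈ F
    · rw [nodeMultiplier_of_mem hyF, norm_zero, zero_mul]; positivity
    rcases eq_or_ne (G y) 0 with hGy | hGy
    · rw [hGy, norm_zero, mul_zero, mul_zero]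
    gcongr
    exact norm_nodeMultiplier_le hσ hm F (hfar y hyF hy hGy)
  have hG' := hG.mul_nodeMultiplier hσ hm F
  have hzero := hG'.tsum_zero le_rfl
  rw [hG'.summable_norm.of_norm.tsum_eq_add_tsum_ite 0] at hzero
  rw [← norm_mul, eq_neg_of_add_eq_zero_left hzero, norm_neg]
  exact tsum_of_norm_bounded (hG.summable_norm.hasSum.mul_left _) hterm

lemma norm_apply_zero_mul_two_pow_le (hG : FourierVanishesOn G σ) (hσ : 0 < σ) {η : ℝ} (hη : 0 < η)
    (hsep : (support G).Pairwise fun x y => η ≤ dist x y) (hG0 : G 0 ≠ 0) {N : ℝ} (hN : 0 ≤ N)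
    {m : ℕ} (hm : 0 < m) (hmN : 4 * m ≤ σ * N) :
    ‖G 0‖ * 2 ^ m ≤ (∑' y, ‖G y‖) *
      (6 / min (σ * η / 2) 1) ^ (support G ∩ closedBall 0 N).ncard := by
  have hfin := (finite_inter_closedBall_and_ncard_le hη hsep 0 hN).1
  set F : Finset ℝ := hfin.toFinset.erase 0
  have hF {k : ℝ} : k ∈ F ↔ k ≠ 0 ∧ G k ≠ 0 ∧ |k| ≤ N := by simp [F]
  set ρ := min (σ * η / 2) 1
  have hρ : 0 < ρ := lt_min (by positivity) one_pos
  have hlower : (ρ / 3) ^ F.card ≤ ‖nodeMultiplier σ m F 0‖ := by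
    rw [nodeMultiplier_zero hσ hm, norm_prod]
    refine pow_card_le_prod_norm_one_sub_e2piR hη hσ
      (hsep.mono fun k hk => (hF.1 hk).2.1) fun k hk => ?_
    simpa using hsep (hF.1 hk).2.1 hG0 (hF.1 hk).1
  have hupper : ‖nodeMultiplier σ m F 0‖ * ‖G 0‖ ≤ (1 / 2) ^ m * 2 ^ F.card * ∑' y, ‖G y‖ := by
    refine hG.norm_nodeMultiplier_zero_mul_le hσ hm fun y hyF hy hGy => hmN.trans ?_
    gcongr
    exact (not_le.1 fun hyN => hyF (hF.2 ⟨hy, hGy, hyN⟩)).le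
  have hbalance := (mul_le_mul_of_nonneg_right hlower (norm_nonneg (G 0))).trans hupper
  have hcard : F.card ≤ (support G ∩ closedBall 0 N).ncard := by
    rw [ncard_eq_toFinset_card _ hfin]
    exact Finset.card_erase_le
  calc ‖G 0‖ * 2 ^ m = (ρ / 3) ^ F.card * ‖G 0‖ * ((3 / ρ) ^ F.card * 2 ^ m) := by
        have : (ρ / 3) ^ F.card * (3 / ρ) ^ F.card = 1 := by rw [← mul_pow]; field_simp; simp
        linear_combination -(‖G 0‖ * 2 ^ m) * this
    _ ≤ (1 / 2) ^ m * 2 ^ F.card * (∑' y, ‖G y‖) * ((3 / ρ) ^ F.card * 2 ^ m) :=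
        mul_le_mul_of_nonneg_right hbalance (by positivity)
    _ = (∑' y, ‖G y‖) * (6 / ρ) ^ F.card := by
        have h2 : (1 / 2 : ℝ) ^ m * 2 ^ m = 1 := by rw [← mul_pow]; norm_num
        have h6 : (6 / ρ) ^ F.card = 2 ^ F.card * (3 / ρ) ^ F.card := by
          rw [← mul_pow]; ring
        rw [h6]
        linear_combination (2 ^ F.card * (3 / ρ) ^ F.card * ∑' y, ‖G y‖) * h2
    _ ≤ (∑' y, ‖G y‖) * (6 / ρ) ^ (support G ∩ closedBall 0 N).ncard := by
        gcongr
        rw [le_div_iff₀ hρ]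
        linarith [min_le_right (σ * η / 2) 1]

end FourierVanishesOn

lemma exists_eventually_mul_le_ncard_of_fourierVanishesOn {η σ : ℝ} (hη : 0 < η) (hσ : 0 < σ) :
    ∃ κ > 0, ∀ G, FourierVanishesOn G σ → (support G).Pairwise (fun x y => η ≤ dist x y) →
      G 0 ≠ 0 → ∀ᶠ N in atTop, κ * N ≤ (support G ∩ closedBall 0 N).ncard := by
  set ρ := min (σ * η / 2) 1
  have hρ : 0 < ρ := lt_min (by positivity) one_pos
  have hlog : 0 < Real.log (6 / ρ) :=
    Real.log_pos ((lt_div_iff₀ hρ).2 (by linarith [min_le_right (σ * η / 2) 1]))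
  have hlog2 : 0 < Real.log 2 := Real.log_pos one_lt_two
  refine ⟨σ * Real.log 2 / (8 * Real.log (6 / ρ)), by positivity, fun G hG hsep hG0 => ?_⟩
  have hg0 : 0 < ‖G 0‖ := norm_pos_iff.2 hG0
  have hS : 0 < ∑' y, ‖G y‖ := hG.summable_norm.tsum_pos (fun _ => norm_nonneg _) 0 hg0
  filter_upwards [eventually_ge_atTop (4 / σ), eventually_ge_atTop
    (8 * (Real.log 2 + Real.log (∑' y, ‖G y‖) - Real.log ‖G 0‖) / (σ * Real.log 2))] with N hN hN'
  rw [div_le_iff₀ hσ] at hN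
  rw [div_le_iff₀ (by positivity)] at hN'
  have hN0 : 0 ≤ N := by nlinarith
  have hfloor := Nat.floor_le (a := σ * N / 4) (by positivity)
  have hfloor_lt := Nat.lt_floor_add_one (σ * N / 4)
  have hle := Real.log_le_log (by positivity) (hG.norm_apply_zero_mul_two_pow_le hσ hη hsep hG0 hN0
    (m := ⌊σ * N / 4⌋₊) (Nat.floor_pos.2 (by linarith)) (by linarith))
  rw [Real.log_mul hg0.ne' (by positivity), Real.log_mul hS.ne' (by positivity), Real.log_pow,
    Real.log_pow] at hle
  rw [div_mul_eq_mul_div, div_le_iff₀ (by positivity)]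
  nlinarith

/- Around any point of its support, `c` is localised by a Schwartz function whose Fourier transform
is a bump inside the spectral gap. -/
lemma SpectrumIn.exists_fourierVanishesOn {c : ℝ → ℂ} {D : Set ℝ} {δ η C : ℝ} (hδ : 0 < δ)
    (hη : 0 < η) (hD : Disjoint D (Ioo 0 δ)) (hc : SpectrumIn c D) (hC : ∀ x, ‖c x‖ ≤ C)
    (hsep : (support c).Pairwise fun x y => η ≤ dist x y) (x : ℝ) :
    ∃ χ : 𝓢(ℝ, ℂ), χ 0 ≠ 0 ∧ FourierVanishesOn (fun y => c (y + x) * χ y) (δ / 2) := by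
  obtain ⟨ψ, -, hψ, -, hψ0⟩ := exists_schwartz_bump (3 * δ / 4) (r := δ / 8) (by positivity)
  refine ⟨𝓕 ψ, hψ0, ?_, fun {s} hs => ?_⟩
  · obtain ⟨K, -, hK⟩ := exists_tsum_norm_le_of_separated hη
    obtain ⟨B, -, hB⟩ := exists_le_div_one_add_sq (𝓕 ψ)
    rw [← (Equiv.subRight x).summable_iff]
    simp only [comp_def, Equiv.subRight_apply, sub_add_cancel]
    refine (hK _ (hsep.mono (support_mul_subset_left _ _)) x (C * B) fun l => ?_).1
    rw [norm_mul, mul_assoc, mul_one_div]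
    exact mul_le_mul (hC l) (hB _) (norm_nonneg _) ((norm_nonneg _).trans (hC 0))
  · have hvanish : ∀ t ∈ D, compSubConstCLM ℂ (-s) ψ t = 0 := by
      intro t ht
      rw [compSubConstCLM_apply]
      refine hψ _ (not_lt.1 fun hlt => hD.ne_of_mem ht ?_ rfl)
      rw [Real.dist_eq, abs_lt] at hlt
      exact ⟨by linarith [hs.2], by linarith [hs.1]⟩
    rw [← hc.tsum_fourier_sub hvanish x, ← (Equiv.addRight x).tsum_eq
      fun l => c l * 𝓕 (compSubConstCLM ℂ (-s) ψ) (l - x)]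
    congr 1 with y
    rw [fourier_compSubConstCLM, Equiv.coe_addRight, add_sub_cancel_right, neg_neg]
    ring

lemma exists_eventually_mul_le_ncard_of_spectrumIn {δ η : ℝ} (hδ : 0 < δ) (hη : 0 < η) {D : Set ℝ}
    (hD : Disjoint D (Ioo 0 δ)) :
    ∃ κ > 0, ∀ c C, SpectrumIn c D → (∀ x, ‖c x‖ ≤ C) →
      (support c).Pairwise (fun x y => η ≤ dist x y) → (support c).Nonempty →
      ∀ᶠ N in atTop, κ * N ≤ (support c ∩ closedBall 0 N).ncard := by
  obtain ⟨κ, hκ, hdensity⟩ :=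
    exists_eventually_mul_le_ncard_of_fourierVanishesOn hη (half_pos hδ)
  refine ⟨κ / 2, half_pos hκ, fun c C hc hC hsep ⟨x, hx⟩ => ?_⟩
  obtain ⟨χ, hχ, hG⟩ := hc.exists_fourierVanishesOn hδ hη hD hC hsep x
  have hsub {y : ℝ} (hy : c (y + x) * χ y ≠ 0) : c (y + x) ≠ 0 := left_ne_zero_of_mul hy
  have hGsep : (support fun y => c (y + x) * χ y).Pairwise fun y z => η ≤ dist y z := by
    intro y hy z hz hyz
    simpa using hsep (hsub hy) (hsub hz) (by simpa using hyz)
  have hG0 : c (0 + x) * χ 0 ≠ 0 := mul_ne_zero (by rwa [zero_add]) hχ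
  have hhalf : Tendsto (fun N : ℝ => N / 2) atTop atTop := tendsto_id.atTop_div_const two_pos
  filter_upwards [hhalf.eventually (hdensity _ hG hGsep hG0), eventually_ge_atTop (2 * |x|)]
    with N hN hNx
  have hfin := (finite_inter_closedBall_and_ncard_le hη hsep 0 (T := N)
    (by linarith [abs_nonneg x])).1
  have hmaps : MapsTo (· + x) ((support fun y => c (y + x) * χ y) ∩ closedBall 0 (N / 2))
      (support c ∩ closedBall 0 N) := by
    rintro y ⟨hy, hyN⟩
    rw [mem_closedBall_zero_iff, Real.norm_eq_abs] at hyN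
    refine ⟨hsub hy, ?_⟩
    rw [mem_closedBall_zero_iff, Real.norm_eq_abs]
    linarith [abs_add_le y x]
  calc κ / 2 * N = κ * (N / 2) := by ring
    _ ≤ _ := hN
    _ ≤ _ := by
        exact_mod_cast ncard_le_ncard_of_injOn _ hmaps (add_left_injective x).injOn hfin

/-! ### Finite local complexity of the support -/

lemma card_filter_add_mem_le {η T : ℝ} (hη : 0 < η) (hT : 0 ≤ T) {Λ : Set ℝ}
    [DecidablePred (· ∈ Λ)] (hΛ : Λ.Pairwise fun x y => η ≤ dist x y) {H : Finset ℝ}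
    (hHT : ∀ h ∈ H, |h| ≤ T) (l : ℝ) :
    ((H.filter fun h => l + h ∈ Λ).card : ℝ) ≤ 2 * T / η + 1 := by
  have hsep : {h | h ∈ H ∧ l + h ∈ Λ}.Pairwise fun x y => η ≤ dist x y := by
    intro x hx y hy hxy
    simpa using hΛ hx.2 hy.2 (by simpa using hxy)
  obtain ⟨hfin, hcard⟩ := finite_inter_closedBall_and_ncard_le hη hsep 0 hT
  refine le_trans ?_ hcard
  rw [← ncard_coe_finset, Nat.cast_le]
  refine ncard_le_ncard (fun h hh => ?_) hfin
  rw [Finset.mem_coe, Finset.mem_filter] at hh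
  exact ⟨hh, by simpa using hHT h hh.1⟩

lemma card_mul_le_of_eventually_mul_le_ncard {η κ T : ℝ} (hη : 0 < η) (hT : 0 ≤ T) {Λ : Set ℝ}
    (hΛ : Λ.Pairwise fun x y => η ≤ dist x y) {H : Finset ℝ} (hHT : ∀ h ∈ H, |h| ≤ T)
    (hH : ∀ h ∈ H, ∀ᶠ N in atTop, κ * N ≤ (Λ ∩ (· + h) ⁻¹' Λ ∩ closedBall 0 N).ncard) :
    H.card * κ ≤ (2 / η + 1) * (2 * T / η + 1) := by
  classical
  obtain ⟨N, hN, hN1⟩ :=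
    (((Filter.eventually_all_finset H).2 hH).and (eventually_ge_atTop 1)).exists
  have hN0 : 0 < N := one_pos.trans_le hN1
  obtain ⟨hfin, hcard⟩ := finite_inter_closedBall_and_ncard_le hη hΛ 0 hN0.le
  set A := hfin.toFinset
  rw [ncard_eq_toFinset_card _ hfin] at hcard
  have hshift : ∀ h ∈ H, κ * N ≤ (A.filter fun l => l + h ∈ Λ).card := by
    intro h hh
    refine (hN h hh).trans_eq ?_
    rw [← ncard_coe_finset]
    congr 2
    ext l
    simp [A]
    tauto
  have hdouble : ∑ h ∈ H, ((A.filter fun l => l + h ∈ Λ).card : ℝ) =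
      ∑ l ∈ A, ((H.filter fun h => l + h ∈ Λ).card : ℝ) := by
    exact_mod_cast Finset.sum_card_bipartiteAbove_eq_sum_card_bipartiteBelow fun h l => l + h ∈ Λ
  refine le_of_mul_le_mul_right ?_ hN0
  calc H.card * κ * N = ∑ _h ∈ H, κ * N := by rw [Finset.sum_const, nsmul_eq_mul, mul_assoc]
    _ ≤ ∑ l ∈ A, ((H.filter fun h => l + h ∈ Λ).card : ℝ) :=
        (Finset.sum_le_sum hshift).trans_eq hdouble
    _ ≤ A.card * (2 * T / η + 1) := by
        rw [← nsmul_eq_mul]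
        exact Finset.sum_le_card_nsmul _ _ _ fun l _ => card_filter_add_mem_le hη hT hΛ hHT l
    _ ≤ (2 * N / η + 1) * (2 * T / η + 1) := by gcongr
    _ ≤ (2 / η * N + N) * (2 * T / η + 1) := by gcongr; exact (div_mul_eq_mul_div _ _ _).ge
    _ = (2 / η + 1) * (2 * T / η + 1) * N := by ring

lemma locFiniteR_sub_of_eventually_mul_le_ncard {η κ : ℝ} (hη : 0 < η) (hκ : 0 < κ) {Λ : Set ℝ}
    (hΛ : Λ.Pairwise fun x y => η ≤ dist x y) (hdense : ∀ h ∈ Λ - Λ,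
      ∀ᶠ N in atTop, κ * N ≤ (Λ ∩ (· + h) ⁻¹' Λ ∩ closedBall 0 N).ncard) :
    LocFiniteR (Λ - Λ) := by
  intro x r
  by_contra hinf
  set T := |x| + |r|
  have hT : 0 ≤ T := by positivity
  have hball {h : ℝ} (hh : h ∈ ball x r) : |h| ≤ T := by
    rw [mem_ball, Real.dist_eq] at hh
    linarith [abs_sub_abs_le_abs_sub h x, le_abs_self r]
  obtain ⟨M, hM⟩ := exists_nat_gt ((2 / η + 1) * (2 * T / η + 1) / κ)
  obtain ⟨H, hH, rfl⟩ := Set.Infinite.exists_subset_card_eq hinf M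
  rw [div_lt_iff₀ hκ] at hM
  exact hM.not_ge (card_mul_le_of_eventually_mul_le_ncard hη hT hΛ
    (fun h hh => hball (hH hh).2) fun h hh => hdense h (hH hh).1)

lemma IsPoissonPair.locFiniteR_sub {a b : ℝ → ℂ} (hab : IsPoissonPair a b)
    (ha : UniformlyDiscreteR (support a)) (hb : UniformlyDiscreteR (support b)) :
    LocFiniteR (support a - support a) := by
  obtain ⟨C, hC⟩ := hab.exists_norm_le ha
  have hspec := hab.spectrumIn_correlation ha
  obtain ⟨η, hη, hsep⟩ := ha
  obtain ⟨δ, hδ, hgap⟩ := hb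
  have hD : Disjoint (support b - support b) (Ioo 0 δ) := by
    rw [Set.disjoint_left]
    rintro _ ⟨s, hs, t, ht, rfl⟩ hst
    have := hgap s hs t ht (sub_pos.1 hst.1).ne'
    rw [Real.dist_eq, abs_of_pos hst.1] at this
    exact this.not_gt hst.2
  obtain ⟨κ, hκ, hdense⟩ := exists_eventually_mul_le_ncard_of_spectrumIn hδ hη hD
  refine locFiniteR_sub_of_eventually_mul_le_ncard hη hκ hsep ?_
  rintro _ ⟨x, hx, y, hy, rfl⟩
  rw [← support_correlation]
  refine hdense _ _ (hspec (x - y)) (norm_correlation_le hC _)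
    (Set.Pairwise.mono (support_correlation_subset a _) hsep) ⟨y, ?_⟩
  rw [support_correlation]
  exact ⟨hy, by rwa [mem_preimage, add_sub_cancel]⟩

/-! ### Uniform relative density of the supports -/

lemma e2piR_injective : Injective fun t y => e2piR y t := by
  intro s t hst
  by_contra hne
  have hsub : s - t ≠ 0 := sub_ne_zero.2 hne
  have hhalf : e2piR (1 / (2 * (s - t))) (s - t) = 1 := by
    have hval : e2piR (1 / (2 * (s - t))) s = e2piR (1 / (2 * (s - t))) t := congrFun hst _
    rw [sub_eq_add_neg s, e2piR_add_right, ← sub_eq_add_neg, hval, ← e2piR_add_right,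
      add_neg_cancel, e2piR_zero_right]
  have hneg : e2piR (1 / (2 * (s - t))) (s - t) = -1 := by
    rw [← Complex.exp_pi_mul_I, e2piR]
    congr 3
    field_simp
  rw [hneg] at hhalf
  norm_num at hhalf

lemma linearIndependent_e2piR : LinearIndependent ℂ fun t y => e2piR y t := by
  let χ (t : ℝ) : Multiplicative ℝ →* ℂ :=
    { toFun y := e2piR y.toAdd t
      map_one' := e2piR_zero_left t
      map_mul' y z := e2piR_add_left y.toAdd z.toAdd t }
  have hχ : Injective χ := fun s t hst => e2piR_injective (congrArg DFunLike.coe hst)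
  exact (linearIndependent_monoidHom (Multiplicative ℝ) ℂ).comp χ hχ

lemma eq_zero_of_forall_sum_mul_e2piR_eq_zero {T : Finset ℝ} {γ : T → ℂ}
    (hγ : ∀ y ∈ Icc (-1 : ℝ) 1, ∑ t, γ t * e2piR y t = 0) : γ = 0 := by
  have hana : AnalyticOnNhd ℝ (fun y => ∑ t, γ t * e2piR y t) univ := by
    intro y _
    unfold e2piR
    have hofReal : AnalyticAt ℝ (fun r : ℝ => (r : ℂ)) y := Complex.ofRealCLM.analyticAt y
    refine Finset.analyticAt_fun_sum _ fun t _ => analyticAt_const.mul ?_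
    refine (analyticAt_cexp.restrictScalars (𝕜 := ℝ)).comp ?_
    push_cast
    fun_prop
  have hzero : (fun y => ∑ t, γ t * e2piR y t) = 0 := by
    refine hana.eq_of_eventuallyEq analyticOnNhd_const (z₀ := 0) ?_
    filter_upwards [Icc_mem_nhds (by norm_num : (-1 : ℝ) < 0) one_pos] with y hy using hγ y hy
  have hindep := linearIndependent_e2piR.comp ((↑) : T → ℝ) Subtype.val_injective
  refine funext (Fintype.linearIndependent_iff.1 hindep γ ?_)
  rw [← hzero]
  ext y
  simp only [Finset.sum_apply, Pi.smul_apply, comp_apply, smul_eq_mul]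

/- Translating a trigonometric sum changes only the phases of its coefficients, so one norm
comparison on the finite-dimensional space of coefficients serves all windows `[x - 1, x + 1]`. -/
lemma exists_mul_norm_sum_mul_e2piR_le (T : Finset ℝ) :
    ∃ κ > 0, ∀ (γ : ℝ → ℂ) (x z : ℝ), ∃ y, |y - x| ≤ 1 ∧
      κ * ‖∑ t ∈ T, γ t * e2piR z t‖ ≤ ‖∑ t ∈ T, γ t * e2piR y t‖ := by
  let Φ : (T → ℂ) →ₗ[ℂ] C(Icc (-1 : ℝ) 1, ℂ) :=
    { toFun γ := ⟨fun y => ∑ t, γ t * e2piR y t, by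
        unfold e2piR; fun_prop⟩
      map_add' γ γ' := by
        ext y
        simp [add_mul, Finset.sum_add_distrib]
      map_smul' c γ := by
        ext y
        simp [mul_assoc, Finset.mul_sum] }
  have hker : LinearMap.ker Φ = ⊥ := by
    refine LinearMap.ker_eq_bot'.2 fun γ hγ =>
      eq_zero_of_forall_sum_mul_e2piR_eq_zero fun y hy => ?_
    have : Φ γ ⟨y, hy⟩ = 0 := by rw [hγ, ContinuousMap.zero_apply]
    exact this
  obtain ⟨K, hK, hΦ⟩ := Φ.exists_antilipschitzWith hker
  refine ⟨1 / (T.card * K + 1), by positivity, fun γ x z => ?_⟩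
  let γ' (t : T) : ℂ := γ t * e2piR x t
  have hγ' : ‖γ'‖ ≤ K * ‖Φ γ'‖ := ZeroHomClass.bound_of_antilipschitz Φ hΦ γ'
  have hz : ‖∑ t ∈ T, γ t * e2piR z t‖ ≤ T.card * ‖γ'‖ := by
    rw [← nsmul_eq_mul]
    refine (norm_sum_le _ _).trans (Finset.sum_le_card_nsmul _ _ _ fun t ht => ?_)
    have := norm_le_pi_norm γ' ⟨t, ht⟩
    simpa [γ'] using this
  have : Nonempty (Icc (-1 : ℝ) 1) := ⟨⟨0, by norm_num⟩⟩
  by_contra! hlt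
  have hΦlt : ‖Φ γ'‖ < 1 / (T.card * K + 1) * ‖∑ t ∈ T, γ t * e2piR z t‖ := by
    refine (Φ γ').norm_lt_iff_of_nonempty.2 fun y => ?_
    have hΦy : Φ γ' y = ∑ t ∈ T, γ t * e2piR (x + y) t := by
      rw [← Finset.sum_coe_sort]
      refine Finset.sum_congr rfl fun t _ => ?_
      rw [e2piR_add_left, ← mul_assoc]
    rw [hΦy]
    exact hlt _ (by rw [add_sub_cancel_left]; exact abs_le.2 y.2)
  rw [one_div_mul_eq_div, lt_div_iff₀ (by positivity)] at hΦlt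
  have : T.card * ‖γ'‖ ≤ T.card * (K * ‖Φ γ'‖) := by gcongr
  nlinarith [norm_nonneg (Φ γ')]

lemma LocFiniteR.exists_schwartz_isolating {D : Set ℝ} (hD : LocFiniteR D) (t : ℝ) :
    ∃ χ : 𝓢(ℝ, ℂ), χ t = 1 ∧ ∀ d ∈ D, d ≠ t → χ d = 0 := by
  have hfin : ((D ∩ ball t 1) \ {t}).Finite := (hD t 1).sdiff
  obtain ⟨r, hr, hball⟩ := Metric.isOpen_iff.1 hfin.isClosed.isOpen_compl t (by simp)
  obtain ⟨χ, hχt, hχ, -⟩ := exists_schwartz_bump t (lt_min hr one_pos)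
  refine ⟨χ, hχt, fun d hd hdt => hχ d (not_lt.1 fun hlt => ?_)⟩
  exact hball (hlt.trans_le (min_le_left _ _)) ⟨⟨hd, hlt.trans_le (min_le_right _ _)⟩, hdt⟩

lemma fourier_sub_sum_smul (ψ : 𝓢(ℝ, ℂ)) (T : Finset ℝ) (c : ℝ → ℂ) (χ : ℝ → 𝓢(ℝ, ℂ)) :
    𝓕 (ψ - ∑ t ∈ T, c t • χ t) = 𝓕 ψ - ∑ t ∈ T, c t • 𝓕 (χ t) := by
  simp only [← FourierTransform.fourierCLM_apply (R := ℂ), map_sub, map_sum, map_smul]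

/- On test functions that see only the part `T` of the spectrum, the measure acts as a combination
of point evaluations. -/
lemma SpectrumIn.exists_tsum_fourier_eq_sum {c : ℝ → ℂ} {D : Set ℝ} (hc : SpectrumIn c D)
    (hD : LocFiniteR D) (hsum : ∀ φ : 𝓢(ℝ, ℂ), Summable fun l => c l * φ l) (T : Finset ℝ) :
    ∃ β : ℝ → ℂ, ∀ ψ : 𝓢(ℝ, ℂ), (∀ d ∈ D, d ∉ T → ψ d = 0) →
      ∑' l, c l * 𝓕 ψ l = ∑ t ∈ T, ψ t * β t := by
  choose χ hχt hχ using hD.exists_schwartz_isolating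
  refine ⟨fun t => ∑' l, c l * 𝓕 (χ t) l, fun ψ hψ => ?_⟩
  have hvanish : ∀ d ∈ D, (ψ - ∑ t ∈ T, ψ t • χ t) d = 0 := by
    intro d hd
    have hoff : ∀ t ∈ T, t ≠ d → ψ t * χ t d = 0 := fun t _ htd => by
      rw [hχ t d hd htd.symm, mul_zero]
    simp only [sub_apply, sum_apply, smul_apply, smul_eq_mul]
    by_cases hdT : d ∈ T
    · rw [Finset.sum_eq_single_of_mem d hdT hoff, hχt, mul_one, sub_self]
    · rw [hψ d hd hdT, Finset.sum_eq_zero fun t ht => hoff t ht (by rintro rfl; exact hdT ht),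
        sub_zero]
  have hterm (l : ℝ) : c l * 𝓕 (ψ - ∑ t ∈ T, ψ t • χ t) l =
      c l * 𝓕 ψ l - ∑ t ∈ T, ψ t * (c l * 𝓕 (χ t) l) := by
    simp only [fourier_sub_sum_smul, sub_apply, sum_apply, smul_apply, smul_eq_mul, mul_sub,
      Finset.mul_sum, mul_left_comm (c l)]
  have hχsum : ∀ t ∈ T, Summable fun l => ψ t * (c l * 𝓕 (χ t) l) :=
    fun t _ => (hsum _).mul_left _
  have hzero := hc _ hvanish
  simp only [hterm] at hzero
  rw [(hsum _).tsum_sub (summable_sum hχsum), Summable.tsum_finsetSum hχsum, sub_eq_zero] at hzero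
  simp only [hzero, tsum_mul_left]

lemma exists_forall_norm_le_mul_one_div_one_add_sq (φ : 𝓢(ℝ, ℂ)) {ε : ℝ} (hε : 0 < ε) :
    ∃ R, ∀ y, R ≤ |y| → ‖φ y‖ ≤ ε * (1 / (1 + y ^ 2)) := by
  obtain ⟨C, -, hdecay⟩ := φ.decay 3 0
  refine ⟨max 1 (2 * C / ε), fun y hy => ?_⟩
  obtain ⟨hy1, hyC⟩ := max_le_iff.1 hy
  have hcube := hdecay y
  rw [norm_iteratedFDeriv_zero, Real.norm_eq_abs] at hcube
  rw [div_le_iff₀ hε] at hyC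
  rw [mul_one_div, le_div_iff₀ (by positivity)]
  have hsq : 1 + y ^ 2 ≤ 2 * |y| ^ 2 := by rw [← sq_abs y]; nlinarith
  have : |y| * (‖φ y‖ * (1 + y ^ 2)) ≤ |y| * ε := by
    calc |y| * (‖φ y‖ * (1 + y ^ 2)) ≤ |y| * (‖φ y‖ * (2 * |y| ^ 2)) := by gcongr
      _ = 2 * (|y| ^ 3 * ‖φ y‖) := by ring
      _ ≤ |y| * ε := by linarith
  exact le_of_mul_le_mul_left this (by linarith)

lemma exists_fourier_dilation (ψ : 𝓢(ℝ, ℂ)) {M : ℝ} (hM : 0 < M) :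
    ∃ θ : 𝓢(ℝ, ℂ), (∀ t, θ t = ψ (t / M)) ∧ ∀ y, 𝓕 θ y = M * 𝓕 ψ (M * y) := by
  let g : ℝ ≃L[ℝ] ℝ := .unitsEquivAut ℝ (Units.mk0 M⁻¹ (by positivity))
  have hθ (t : ℝ) : compCLMOfContinuousLinearEquiv ℂ g ψ t = ψ (t / M) := by
    simp [g, div_eq_mul_inv]
  refine ⟨compCLMOfContinuousLinearEquiv ℂ g ψ, hθ, fun y => ?_⟩
  have hdil := Measure.integral_comp_div (fun t => e2piR t (-(M * y)) * ψ t) M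
  rw [abs_of_pos hM, Complex.real_smul] at hdil
  rw [fourier_apply_eq_integral, fourier_apply_eq_integral, ← hdil]
  congr 1 with t
  rw [hθ, e2piR, e2piR]
  congr 5
  field_simp

lemma exists_compactly_supported_fourier_concentrated {η ε : ℝ} (hη : 0 < η) (hε : 0 < ε) :
    ∃ (θ : 𝓢(ℝ, ℂ)) (M : ℝ), (∀ t, M < |t| → θ t = 0) ∧ 𝓕 θ 0 ≠ 0 ∧
      ∀ y, η ≤ |y| → ‖𝓕 θ y‖ ≤ ε * ‖𝓕 θ 0‖ * (1 / (1 + y ^ 2)) := by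
  obtain ⟨u, -, hu, -, hu0⟩ := exists_schwartz_bump 0 one_pos
  obtain ⟨R, hdecay⟩ :=
    exists_forall_norm_le_mul_one_div_one_add_sq (𝓕 u) (mul_pos hε (norm_pos_iff.2 hu0))
  set M := max 1 (R / η)
  have hM1 : 1 ≤ M := le_max_left _ _
  have hM : 0 < M := one_pos.trans_le hM1
  have hMR : R ≤ M * η := (div_le_iff₀ hη).1 (le_max_right _ _)
  obtain ⟨θ, hθ, hθF⟩ := exists_fourier_dilation u hM
  refine ⟨θ, M, fun t ht => ?_, ?_, fun y hy => ?_⟩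
  · rw [hθ, hu]
    rw [Real.dist_0_eq_abs, abs_div, abs_of_pos hM, one_le_div hM]
    exact ht.le
  · rw [hθF, mul_zero]
    exact mul_ne_zero (Complex.ofReal_ne_zero.2 hM.ne') hu0
  · have hfar : R ≤ |M * y| := by
      rw [abs_mul, abs_of_pos hM]
      exact hMR.trans (by gcongr)
    have hsq : y ^ 2 ≤ (M * y) ^ 2 := by
      rw [mul_pow]
      exact le_mul_of_one_le_left (sq_nonneg y) (one_le_pow₀ hM1)
    rw [hθF, hθF, mul_zero, norm_mul, norm_mul, Complex.norm_of_nonneg hM.le]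
    calc M * ‖𝓕 u (M * y)‖ ≤ M * (ε * ‖𝓕 u 0‖ * (1 / (1 + (M * y) ^ 2))) := by
          gcongr; exact hdecay _ hfar
      _ ≤ M * (ε * ‖𝓕 u 0‖ * (1 / (1 + y ^ 2))) := by gcongr
      _ = ε * (M * ‖𝓕 u 0‖) * (1 / (1 + y ^ 2)) := by ring

lemma exists_forall_norm_le_two_mul {ι E : Type*} [NormedAddCommGroup E] {c : ι → E} {C : ℝ}
    (hC : ∀ l, ‖c l‖ ≤ C) (hne : (support c).Nonempty) :
    ∃ l₀ ∈ support c, ∀ l, ‖c l‖ ≤ 2 * ‖c l₀‖ := by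
  obtain ⟨l₁, hl₁⟩ := hne
  have : Nonempty ι := ⟨l₁⟩
  have hbdd : BddAbove (range fun l => ‖c l‖) := ⟨C, forall_mem_range.2 hC⟩
  have hpos : 0 < ⨆ l, ‖c l‖ := (norm_pos_iff.2 hl₁).trans_le (le_ciSup hbdd l₁)
  obtain ⟨l₀, hl₀⟩ := exists_lt_of_lt_ciSup (half_lt_self hpos)
  refine ⟨l₀, norm_pos_iff.1 ((half_pos hpos).trans hl₀), fun l => ?_⟩
  linarith [le_ciSup hbdd l]

lemma exists_norm_tsum_mul_le_of_separated {η : ℝ} (hη : 0 < η) :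
    ∃ K > 0, ∀ c : ℝ → ℂ, (support c).Pairwise (fun x y => η ≤ dist x y) → ∀ C,
      (∀ l, ‖c l‖ ≤ C) → ∀ (w : ℝ → ℂ) (x ε : ℝ), 0 ≤ ε →
      (∀ l ∈ support c, ‖w l‖ ≤ ε * (1 / (1 + (l - x) ^ 2))) →
      Summable (fun l => c l * w l) ∧ ‖∑' l, c l * w l‖ ≤ C * ε * K := by
  obtain ⟨K, hK, hbound⟩ := exists_tsum_norm_le_of_separated hη
  refine ⟨K, hK, fun c hsep C hC w x ε hε hw => ?_⟩
  have hC0 : 0 ≤ C := (norm_nonneg _).trans (hC 0)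
  obtain ⟨hsum, hle⟩ := hbound (fun l => c l * w l)
    (hsep.mono (support_mul_subset_left _ _)) x (C * ε) fun l => by
      rcases eq_or_ne (c l) 0 with hl | hl
      · rw [hl, zero_mul, norm_zero]
        positivity
      · rw [norm_mul, mul_assoc]
        exact mul_le_mul (hC l) (hw l hl) (norm_nonneg _) hC0
  exact ⟨hsum.of_norm, (norm_tsum_le_tsum_norm hsum).trans hle⟩

lemma summable_mul_of_separated {c : ℝ → ℂ} {η C : ℝ} (hη : 0 < η)
    (hsep : (support c).Pairwise fun x y => η ≤ dist x y) (hC : ∀ l, ‖c l‖ ≤ C)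
    (φ : 𝓢(ℝ, ℂ)) : Summable fun l => c l * φ l := by
  obtain ⟨K, -, hbound⟩ := exists_norm_tsum_mul_le_of_separated hη
  obtain ⟨C', hC', hdecay⟩ := exists_le_div_one_add_sq φ
  refine (hbound c hsep C hC φ 0 C' hC'.le fun l _ => ?_).1
  rw [sub_zero, mul_one_div]
  exact hdecay l

/- Around a point where `c` is nearly maximal, the rest of the sum is dominated by that term. -/
lemma exists_le_norm_tsum_mul_of_concentrated {η : ℝ} (hη : 0 < η) :
    ∃ ε > 0, ∀ c : ℝ → ℂ, (support c).Pairwise (fun x y => η ≤ dist x y) → ∀ l₀ ∈ support c,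
      (∀ l, ‖c l‖ ≤ 2 * ‖c l₀‖) → ∀ w : ℝ → ℂ,
      (∀ l, η ≤ dist l l₀ → ‖w l‖ ≤ ε * ‖w l₀‖ * (1 / (1 + (l - l₀) ^ 2))) →
      ‖c l₀‖ * ‖w l₀‖ ≤ 2 * ‖∑' l, c l * w l‖ := by
  obtain ⟨K, hK, hbound⟩ := exists_norm_tsum_mul_le_of_separated hη
  refine ⟨1 / (4 * K), by positivity, fun c hsep l₀ hl₀ hmax w hw => ?_⟩
  let c' := update c l₀ 0
  have hsupp : support c' = support c \ {l₀} := support_update_zero c l₀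
  have hbdd (l : ℝ) : ‖c' l‖ ≤ 2 * ‖c l₀‖ := by
    rcases eq_or_ne l l₀ with rfl | hne
    · rw [show c' l = 0 from update_self _ _ _, norm_zero]
      positivity
    · rw [show c' l = c l from update_of_ne hne _ _]
      exact hmax l
  obtain ⟨hsum, hle⟩ := hbound c' (hsep.mono (hsupp ▸ sdiff_subset)) _ hbdd w l₀
    (1 / (4 * K) * ‖w l₀‖) (by positivity) fun l hl => by
      rw [hsupp] at hl
      exact hw l (hsep hl.1 hl₀ hl.2)
  have hsplit : ∑' l, c l * w l = c l₀ * w l₀ + ∑' l, c' l * w l := by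
    have hterm : update (fun l => c l * w l) l₀ 0 = fun l => c' l * w l := by
      ext l
      rcases eq_or_ne l l₀ with rfl | hne
      · simp [c']
      · simp [c', hne]
    rw [← hterm] at hsum ⊢
    rw [hsum.tsum_eq_add_tsum_ite' l₀]
    congr 2 with l
    rw [update_apply]
  have hhalf : 2 * ‖c l₀‖ * (1 / (4 * K) * ‖w l₀‖) * K = ‖c l₀‖ * ‖w l₀‖ / 2 := by
    field_simp
    ring
  have htriangle := norm_sub_norm_le (c l₀ * w l₀) (-∑' l, c' l * w l)
  rw [norm_mul, norm_neg, sub_neg_eq_add] at htriangle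
  rw [hsplit]
  linarith

lemma exists_mul_norm_tsum_mul_fourier_sub_le {D : Set ℝ} (hD : LocFiniteR D) {θ : 𝓢(ℝ, ℂ)}
    {M : ℝ} (hθ : ∀ t, M < |t| → θ t = 0) :
    ∃ κ > 0, ∀ c, SpectrumIn c D → (∀ φ : 𝓢(ℝ, ℂ), Summable fun l => c l * φ l) →
      ∀ x z, ∃ y, |y - x| ≤ 1 ∧
        κ * ‖∑' l, c l * 𝓕 θ (l - z)‖ ≤ ‖∑' l, c l * 𝓕 θ (l - y)‖ := by
  obtain ⟨κ, hκ, hcompare⟩ := exists_mul_norm_sum_mul_e2piR_le (hD 0 (M + 1)).toFinset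
  refine ⟨κ, hκ, fun c hc hsum => ?_⟩
  obtain ⟨β, hβ⟩ := hc.exists_tsum_fourier_eq_sum hD hsum (hD 0 (M + 1)).toFinset
  have htrig (x : ℝ) : ∑' l, c l * 𝓕 θ (l - x) =
      ∑ t ∈ (hD 0 (M + 1)).toFinset, θ t * β t * e2piR x t := by
    have := hβ (modulate x θ) fun d hd hdT => by
      rw [modulate_apply, hθ, mul_zero]
      by_contra! hle
      refine hdT ((hD 0 (M + 1)).mem_toFinset.2 ⟨hd, ?_⟩)
      rw [mem_ball, Real.dist_0_eq_abs]
      linarith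
    simp only [fourier_modulate, modulate_apply] at this
    rw [this]
    exact Finset.sum_congr rfl fun t _ => by ring
  simp only [htrig]
  exact hcompare _

lemma exists_forall_nonempty_support_inter_closedBall {D : Set ℝ} (hD : LocFiniteR D) {η : ℝ}
    (hη : 0 < η) :
    ∃ R, ∀ c C, SpectrumIn c D → (∀ x, ‖c x‖ ≤ C) →
      (support c).Pairwise (fun x y => η ≤ dist x y) → (support c).Nonempty →
      ∀ x, (support c ∩ closedBall x R).Nonempty := by
  obtain ⟨ε, hε, hlow⟩ := exists_le_norm_tsum_mul_of_concentrated hη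
  obtain ⟨K, -, hbound⟩ := exists_norm_tsum_mul_le_of_separated hη
  obtain ⟨θ, M, hθ, hθ0, hconc⟩ := exists_compactly_supported_fourier_concentrated hη hε
  obtain ⟨κ, hκ, hcompare⟩ := exists_mul_norm_tsum_mul_fourier_sub_le hD hθ
  obtain ⟨ε', hε', hsmall⟩ := exists_pos_mul_lt (mul_pos hκ (norm_pos_iff.2 hθ0)) (4 * K)
  obtain ⟨R, hfar⟩ := exists_forall_norm_le_mul_one_div_one_add_sq (𝓕 θ) hε'
  refine ⟨R + 1, fun c C hc hC hsep hne x => ?_⟩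
  obtain ⟨l₀, hl₀, hmax⟩ := exists_forall_norm_le_two_mul hC hne
  obtain ⟨y, hyx, hy⟩ := hcompare c hc (summable_mul_of_separated hη hsep hC) x l₀
  by_contra hempty
  have hdist : ∀ l ∈ support c, R ≤ |l - y| := by
    intro l hl
    by_contra! hlt
    refine hempty ⟨l, hl, ?_⟩
    rw [mem_closedBall, Real.dist_eq]
    linarith [abs_sub_le l y x]
  have hupper : ‖∑' l, c l * 𝓕 θ (l - y)‖ ≤ 2 * ‖c l₀‖ * ε' * K :=
    (hbound c hsep _ hmax _ y ε' hε'.le fun l hl => hfar _ (hdist l hl)).2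
  have hlower := hlow c hsep l₀ hl₀ hmax (fun l => 𝓕 θ (l - l₀)) fun l hl => by
    rw [sub_self]
    exact hconc _ hl
  rw [sub_self] at hlower
  have hpos : 0 < ‖c l₀‖ := norm_pos_iff.2 hl₀
  have : κ * (‖c l₀‖ * ‖𝓕 θ 0‖) ≤ 4 * K * ε' * ‖c l₀‖ := by nlinarith
  nlinarith

/-! ### Sets with relatively dense repetitions of their differences -/

lemma sub_subset_of_forall_dist_le {A : Set ℝ} {R : ℝ}
    (hA : ∀ z, (A ∩ closedBall z R).Nonempty) {H : AddSubgroup ℝ}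
    (hH : ∀ x ∈ A, ∀ y ∈ A, |x - y| ≤ 2 * R + 1 → x - y ∈ H) : A - A ⊆ H := by
  have hR : 0 ≤ R := nonempty_closedBall.1 ((hA 0).mono inter_subset_right)
  have hstep (n : ℕ) : ∀ x ∈ A, ∀ y ∈ A, y ≤ x → x - y ≤ n → x - y ∈ H := by
    induction n with
    | zero =>
      intro x hx y hy hyx hn
      rw [Nat.cast_zero] at hn
      exact hH x hx y hy (abs_le.2 ⟨by linarith, by linarith⟩)
    | succ n ih =>
      intro x hx y hy hyx hn
      rw [Nat.cast_succ] at hn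
      rcases le_or_gt (x - y) (2 * R + 1) with hle | hgt
      · exact hH x hx y hy (abs_le.2 ⟨by linarith, hle⟩)
      obtain ⟨z, hz, hzx⟩ := hA (x - (R + 1))
      have hzx := abs_le.1 (mem_closedBall.1 hzx)
      have hxz : x - z ∈ H := hH x hx z hz (abs_le.2 ⟨by linarith, by linarith⟩)
      rw [← sub_add_sub_cancel x z y]
      exact H.add_mem hxz (ih z hz y hy (by linarith) (by linarith))
  rintro _ ⟨x, hx, y, hy, rfl⟩
  obtain ⟨n, hn⟩ := exists_nat_ge |x - y|
  rcases le_total y x with hyx | hxy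
  · exact hstep n x hx y hy hyx ((le_abs_self _).trans hn)
  · rw [abs_sub_comm] at hn
    exact H.sub_mem_comm_iff.1 (hstep n y hy x hx hxy ((le_abs_self _).trans hn))

/- Hyers: the additive map is the limit of `2⁻ⁿ g(2ⁿ x)`. -/
lemma exists_addMonoidHom_norm_sub_le {G E : Type*} [AddCommGroup G] [NormedAddCommGroup E]
    [NormedSpace ℝ E] [CompleteSpace E] {g : G → E} {C : ℝ}
    (hg : ∀ x y, ‖g (x + y) - g x - g y‖ ≤ C) : ∃ L : G →+ E, ∀ x, ‖g x - L x‖ ≤ C := by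
  let u (x : G) (n : ℕ) : E := (2 ^ n : ℝ)⁻¹ • g (2 ^ n • x)
  have hdist (x : G) (n : ℕ) : dist (u x n) (u x (n + 1)) ≤ C / 2 / 2 ^ n := by
    have hdiff : u x (n + 1) - u x n =
        (2 ^ (n + 1) : ℝ)⁻¹ • (g (2 ^ n • x + 2 ^ n • x) - g (2 ^ n • x) - g (2 ^ n • x)) := by
      simp only [u]
      rw [← add_smul, ← two_mul, ← pow_succ']
      module
    rw [dist_comm, dist_eq_norm, hdiff, norm_smul, div_div, ← pow_succ', norm_inv, norm_pow,
      Real.norm_two, inv_mul_eq_div]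
    gcongr
    exact hg _ _
  choose L hL using fun x => cauchySeq_tendsto_of_complete (cauchySeq_of_le_geometric_two (hdist x))
  refine ⟨AddMonoidHom.mk' L fun x y => ?_, fun x => ?_⟩
  · have hdefect (n : ℕ) : ‖u (x + y) n - u x n - u y n‖ ≤ C / 2 ^ n := by
      simp only [u, smul_add, ← smul_sub, norm_smul]
      rw [norm_inv, norm_pow, Real.norm_two, inv_mul_eq_div]
      gcongr
      exact hg _ _
    have hzero : Tendsto (fun n : ℕ => C / 2 ^ n) atTop (𝓝 0) :=
      tendsto_const_nhds.div_atTop (tendsto_pow_atTop_atTop_of_one_lt one_lt_two)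
    have := tendsto_nhds_unique (((hL (x + y)).sub (hL x)).sub (hL y))
      (squeeze_zero_norm hdefect hzero)
    rwa [sub_sub, sub_eq_zero] at this
  · have := dist_le_of_le_geometric_two_of_tendsto₀ (hdist x) (hL x)
    simpa [u, dist_eq_norm] using this

lemma exists_abs_sub_mul_le {g : ℝ → ℝ} {C : ℝ} (hg : ∀ x y, |g (x + y) - g x - g y| ≤ C)
    (hbdd : ∀ x, |x| ≤ 1 → |g x| ≤ C) : ∃ ℓ, ∀ x, |g x - ℓ * x| ≤ C := by
  obtain ⟨L, hL⟩ := exists_addMonoidHom_norm_sub_le (E := ℝ) hg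
  have hcont : Continuous L := by
    refine L.continuous_of_isBounded_nhds_zero (closedBall_mem_nhds 0 one_pos)
      (isBounded_closedBall (x := 0) (r := C + C) |>.subset ?_)
    rintro _ ⟨x, hx, rfl⟩
    rw [mem_closedBall, dist_zero_right] at hx ⊢
    have := norm_sub_le (g x) (g x - L x)
    rw [sub_sub_cancel] at this
    exact this.trans (add_le_add (hbdd x hx) (hL x))
  refine ⟨L 1, fun x => ?_⟩
  have hlin : L x = L 1 * x := by
    simpa [mul_comm] using map_real_smul L hcont x 1
  rw [← hlin]
  exact hL x

/- Coordinates with respect to a rational basis of `ℝ`, with denominators cleared. -/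
lemma exists_integral_coordinates {S : Set ℝ} (hS : S.Finite) :
    ∃ (ι : Type) (_ : Finite ι) (φ : ι → ℝ →+ ℝ),
      (∀ i, ∀ h ∈ AddSubgroup.closure S, ∃ n : ℤ, φ i h = n) ∧
      ∀ h ∈ AddSubgroup.closure S, (∀ i, φ i h = 0) → h = 0 := by
  classical
  let B := Module.Basis.ofVectorSpace ℚ ℝ
  let I := hS.toFinset.biUnion fun x => (B.repr x).support
  obtain ⟨⟨N, hN⟩, hint⟩ := IsLocalization.exist_integer_multiples (nonZeroDivisors ℤ)
    (hS.toFinset ×ˢ I) fun p => B.repr p.1 p.2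
  have hN0 : (N : ℝ) ≠ 0 := by exact_mod_cast nonZeroDivisors.ne_zero hN
  let coord (i : Module.Basis.ofVectorSpaceIndex ℚ ℝ) : ℝ →+ ℝ :=
    (Rat.castHom ℝ).toAddMonoidHom.comp (B.coord i).toAddMonoidHom
  refine ⟨I, inferInstance, fun i => (AddMonoidHom.mulLeft (N : ℝ)).comp (coord i), ?_, ?_⟩
  · intro i h hh
    suffices AddSubgroup.closure S ≤
        (Int.castAddHom ℝ).range.comap ((AddMonoidHom.mulLeft (N : ℝ)).comp (coord i)) by
      obtain ⟨n, hn⟩ := this hh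
      exact ⟨n, hn.symm⟩
    refine (AddSubgroup.closure_le _).2 fun x hx => ?_
    obtain ⟨n, hn⟩ := hint ⟨x, i⟩ (by simp [hx])
    have : (n : ℚ) = N * B.repr x i := by simpa using hn
    refine ⟨n, ?_⟩
    simpa [coord] using congrArg (Rat.cast : ℚ → ℝ) this
  · intro h hh hzero
    have hcoord (i) : coord i h = 0 := by
      by_cases hi : i ∈ I
      · exact (mul_eq_zero.1 (hzero ⟨i, hi⟩)).resolve_left hN0
      suffices AddSubgroup.closure S ≤ (coord i).ker from this hh
      refine (AddSubgroup.closure_le _).2 fun x hx => ?_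
      have : B.repr x i = 0 := Finsupp.notMem_support_iff.1 fun hmem =>
        hi (Finset.mem_biUnion.2 ⟨x, hS.mem_toFinset.2 hx, hmem⟩)
      simp [coord, this]
    refine B.repr.map_eq_zero_iff.1 (Finsupp.ext fun i => ?_)
    simpa [coord] using hcoord i

lemma finite_of_bounded_integral_coordinates {ι : Type*} [Finite ι] {φ : ι → ℝ →+ ℝ} {D : Set ℝ}
    {H : AddSubgroup ℝ} (hDH : D ⊆ H) (hzero : ∀ h ∈ H, (∀ i, φ i h = 0) → h = 0)
    (hint : ∀ i, ∀ h ∈ D, ∃ n : ℤ, φ i h = n) {C : ι → ℝ} (hC : ∀ i, ∀ h ∈ D, |φ i h| ≤ C i) :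
    D.Finite := by
  let T : Set (ι → ℝ) := univ.pi fun i => (↑) '' Icc (-⌈C i⌉) ⌈C i⌉
  have hT : T.Finite := Finite.pi fun i => (finite_Icc _ _).image _
  refine Finite.of_injOn (f := fun h i => φ i h) (t := T) (fun h hh i _ => ?_) ?_ hT
  · obtain ⟨n, hn⟩ := hint i h hh
    have hle := (hC i h hh).trans (Int.le_ceil (C i))
    rw [hn] at hle
    exact ⟨n, abs_le.1 (by exact_mod_cast hle), hn.symm⟩
  · intro h hh k hk heq
    refine sub_eq_zero.1 (hzero _ (H.sub_mem (hDH hh) (hDH hk)) fun i => ?_)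
    rw [map_sub, sub_eq_zero]
    exact congrFun heq i

lemma LocFiniteR.finite_inter_closedBall {A : Set ℝ} (hA : LocFiniteR A) (x r : ℝ) :
    (A ∩ closedBall x r).Finite :=
  (hA x (r + 1)).subset
    (inter_subset_inter_right _ (closedBall_subset_ball (lt_add_one r)))

lemma LocFiniteR.exists_forall_abs_le {A : Set ℝ} (hA : LocFiniteR A) (g : ℝ → ℝ) (r : ℝ) :
    ∃ C, ∀ x ∈ A, |x| ≤ r → |g x| ≤ C := by
  obtain ⟨C, hC⟩ := ((hA.finite_inter_closedBall 0 r).image fun x => |g x|).bddAbove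
  exact ⟨C, fun x hx hxr => hC ⟨x, ⟨hx, mem_closedBall_zero_iff.2 hxr⟩, rfl⟩⟩

/-- Every difference `h` of two elements of `Λ` occurs as a difference `(l + h) - l` with `l` in any
given closed ball of radius `R`. -/
def HasPopularDifferences (Λ : Set ℝ) (R : ℝ) : Prop :=
  ∀ h ∈ Λ - Λ, ∀ z, (Λ ∩ (· + h) ⁻¹' Λ ∩ closedBall z R).Nonempty

namespace HasPopularDifferences

variable {Λ : Set ℝ} {R : ℝ}

lemma nonempty_inter_closedBall (hpop : HasPopularDifferences Λ R) (hne : Λ.Nonempty) (z : ℝ) :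
    (Λ ∩ closedBall z R).Nonempty := by
  obtain ⟨p, hp⟩ := hne
  exact (hpop _ (sub_mem_sub hp hp) z).mono (inter_subset_inter_left _ inter_subset_left)

/- Translating a pair of `Λ` with difference `near y - p` to a place close to `near x` shows that
`near x` is additive in `x` up to short differences. -/
lemma abs_map_near_add_sub_sub_le (hpop : HasPopularDifferences Λ R) {near : ℝ → ℝ}
    (hnear : ∀ x, near x ∈ Λ) (hdist : ∀ x, |near x - x| ≤ R) {p : ℝ} (hp : p ∈ Λ)
    {φ : ℝ →+ ℝ} {C : ℝ} (hC : ∀ h ∈ Λ - Λ, |h| ≤ 4 * R + |p| → |φ h| ≤ C) (x y : ℝ) :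
    |φ (near (x + y) - p) - φ (near x - p) - φ (near y - p)| ≤ C + C := by
  obtain ⟨l, ⟨hl, hlh⟩, hlx⟩ := hpop _ (sub_mem_sub (hnear y) hp) (near x)
  have hsplit : φ (near (x + y) - p) - φ (near x - p) - φ (near y - p) =
      φ (near (x + y) - (l + (near y - p))) + φ (l - near x) := by
    rw [← map_sub, ← map_sub, ← map_add]
    congr 1
    ring
  have hlx := abs_le.1 (mem_closedBall.1 hlx)
  have hx := abs_le.1 (hdist x)
  have hy := abs_le.1 (hdist y)
  have hxy := abs_le.1 (hdist (x + y))
  rw [hsplit]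
  refine (abs_add_le _ _).trans (add_le_add (hC _ (sub_mem_sub (hnear _) hlh) ?_)
    (hC _ (sub_mem_sub hl (hnear x)) ?_))
  · exact abs_le.2 ⟨by linarith [neg_abs_le p], by linarith [le_abs_self p]⟩
  · exact abs_le.2 ⟨by linarith [abs_nonneg p], by linarith [abs_nonneg p]⟩

lemma exists_slope (hpop : HasPopularDifferences Λ R) (hΛ : LocFiniteR (Λ - Λ))
    (hne : Λ.Nonempty) (φ : ℝ →+ ℝ) : ∃ ℓ C, ∀ h ∈ Λ - Λ, |φ h - ℓ * h| ≤ C := by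
  choose near hnear hdist using hpop.nonempty_inter_closedBall hne
  obtain ⟨p, hp⟩ := hne
  obtain ⟨C, hC⟩ := hΛ.exists_forall_abs_le φ (4 * R + 1 + |p|)
  have hR : 0 ≤ R := dist_nonneg.trans (hdist 0)
  have hC0 : 0 ≤ C := (abs_nonneg _).trans
    (hC _ (sub_mem_sub hp hp) (by rw [sub_self, abs_zero]; linarith [abs_nonneg p]))
  have hdist (x : ℝ) : |near x - x| ≤ R := hdist x
  have hadd := hpop.abs_map_near_add_sub_sub_le hnear hdist hp
    fun h hh hle => hC h hh (hle.trans (by linarith))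
  have hbdd (x : ℝ) (hx : |x| ≤ 1) : |φ (near x - p)| ≤ C + C := by
    refine (hC _ (sub_mem_sub (hnear x) hp) ?_).trans (le_add_of_nonneg_left hC0)
    have := abs_sub (near x - x) (p - x)
    rw [sub_sub_sub_cancel_right] at this
    linarith [abs_sub p x, hdist x, hR]
  obtain ⟨ℓ, hℓ⟩ := exists_abs_sub_mul_le (g := fun x => φ (near x - p)) hadd hbdd
  have hclose (x : ℝ) (hx : x ∈ Λ) : |φ (x - near x)| ≤ C := by
    refine hC _ (sub_mem_sub hx (hnear x)) ?_
    rw [abs_sub_comm]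
    linarith [hdist x, hR, abs_nonneg p]
  refine ⟨ℓ, C + C + (C + C) + (C + C), ?_⟩
  rintro _ ⟨x, hx, y, hy, rfl⟩
  have hsplit : φ (x - y) - ℓ * (x - y) = φ (x - near x) - φ (y - near y) +
      (φ (near x - p) - ℓ * x) - (φ (near y - p) - ℓ * y) := by
    simp only [map_sub]
    ring
  rw [hsplit]
  refine (abs_sub _ _).trans (add_le_add ((abs_add_le _ _).trans (add_le_add
    ((abs_sub _ _).trans (add_le_add (hclose x hx) (hclose y hy))) (hℓ x))) (hℓ y))

lemma infinite_sub (hpop : HasPopularDifferences Λ R) (hne : Λ.Nonempty) :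
    (Λ - Λ).Infinite := by
  intro hfin
  obtain ⟨C, hC⟩ := hfin.bddAbove
  obtain ⟨p, hp⟩ := hne
  obtain ⟨l, hl, hdist⟩ := hpop.nonempty_inter_closedBall ⟨p, hp⟩ (p + C + R + 1)
  have := abs_le.1 (mem_closedBall.1 hdist)
  linarith [hC (sub_mem_sub hl hp)]

lemma exists_integral_of_slope_ne_zero (hpop : HasPopularDifferences Λ R)
    (hΛ : LocFiniteR (Λ - Λ)) (hne : Λ.Nonempty) :
    ∃ (φ : ℝ →+ ℝ) (ℓ C : ℝ), ℓ ≠ 0 ∧ (∀ h ∈ Λ - Λ, ∃ n : ℤ, φ h = n) ∧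
      ∀ h ∈ Λ - Λ, |φ h - ℓ * h| ≤ C := by
  obtain ⟨ι, _, φ, hint, hzero⟩ :=
    exists_integral_coordinates (hΛ.finite_inter_closedBall 0 (2 * R + 1))
  set H := AddSubgroup.closure ((Λ - Λ) ∩ closedBall 0 (2 * R + 1))
  have hH : Λ - Λ ⊆ H := sub_subset_of_forall_dist_le (hpop.nonempty_inter_closedBall hne)
    fun x hx y hy hxy => AddSubgroup.subset_closure
      ⟨sub_mem_sub hx hy, mem_closedBall_zero_iff.2 hxy⟩
  choose ℓ C hC using fun i => hpop.exists_slope hΛ hne (φ i)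
  obtain ⟨i, hi⟩ : ∃ i, ℓ i ≠ 0 := by
    by_contra! hℓ
    simp only [hℓ, zero_mul, sub_zero] at hC
    exact hpop.infinite_sub hne
      (finite_of_bounded_integral_coordinates hH hzero (fun i h hh => hint i h (hH hh)) hC)
  exact ⟨φ i, ℓ i, C i, hi, fun h hh => hint i h (hH hh), hC i⟩

/- If `ψ h` is nearly maximal, then any nonzero value `ψ (x - y)` at a short difference of points
`x`, `y` for which `x + h` and `y + h` also lie in `Λ` would push `ψ` above its supremum. -/
lemma exists_sub_subset_ker (hpop : HasPopularDifferences Λ R) (hΛ : LocFiniteR (Λ - Λ))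
    (hne : Λ.Nonempty) {ψ : ℝ →+ ℝ} (hψ : BddAbove (ψ '' (Λ - Λ))) :
    ∃ h ∈ Λ - Λ, Λ ∩ (· + h) ⁻¹' Λ - Λ ∩ (· + h) ⁻¹' Λ ⊆ ψ.ker := by
  have hgap : (ψ '' ((Λ - Λ) ∩ closedBall 0 (2 * R + 1)) \ {0})ᶜ ∈ 𝓝 (0 : ℝ) :=
    (((hΛ.finite_inter_closedBall _ _).image ψ).subset sdiff_subset).isClosed.compl_mem_nhds
      fun h => h.2 rfl
  obtain ⟨ε, hε, hball⟩ := Metric.mem_nhds_iff.1 hgap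
  obtain ⟨_, ⟨h, hh, rfl⟩, hmax⟩ := exists_lt_of_lt_csSup ((hne.sub hne).image ψ)
    (sub_lt_self (sSup (ψ '' (Λ - Λ))) hε)
  have hlt {x y : ℝ} (hx : x + h ∈ Λ) (hy : y ∈ Λ) : ψ (x - y) < ε := by
    have hle := le_csSup hψ ⟨_, sub_mem_sub hx hy, rfl⟩
    rw [add_sub_right_comm, map_add] at hle
    linarith
  refine ⟨h, hh, sub_subset_of_forall_dist_le (hpop h hh) fun x hx y hy hxy => ?_⟩
  have hsmall : ψ (x - y) ∈ ball 0 ε := by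
    rw [mem_ball_zero_iff, Real.norm_eq_abs, abs_lt, neg_lt, ← map_neg, neg_sub]
    exact ⟨hlt hy.2 hx.1, hlt hx.2 hy.1⟩
  by_contra hker
  exact hball hsmall ⟨⟨_, ⟨sub_mem_sub hx.1 hy.1, mem_closedBall_zero_iff.2 hxy⟩, rfl⟩, hker⟩

lemma exists_finite_image_toIcoMod (hpop : HasPopularDifferences Λ R) (hΛ : LocFiniteR (Λ - Λ)) :
    ∃ (α : ℝ) (hα : 0 < α), (toIcoMod hα 0 '' Λ).Finite := by
  rcases Λ.eq_empty_or_nonempty with rfl | hne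
  · exact ⟨1, one_pos, by simp⟩
  obtain ⟨φ, ℓ, C, hℓ, hint, hC⟩ := hpop.exists_integral_of_slope_ne_zero hΛ hne
  let ψ : ℝ →+ ℝ := φ - AddMonoidHom.mulLeft ℓ
  have hψ (x : ℝ) : ψ x = φ x - ℓ * x := rfl
  obtain ⟨h, hh, hker⟩ := hpop.exists_sub_subset_ker hΛ hne (ψ := ψ)
    ⟨C, by rintro _ ⟨d, hd, rfl⟩; exact (le_abs_self _).trans (hC d hd)⟩
  obtain ⟨q, hq, -⟩ := hpop h hh 0
  have hα : 0 < |ℓ|⁻¹ := inv_pos.2 (abs_pos.2 hℓ)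
  have hfin : ((Λ - Λ) ∩ closedBall 0 R).Finite := hΛ.finite_inter_closedBall 0 R
  refine ⟨|ℓ|⁻¹, hα, (hfin.image fun d => toIcoMod hα 0 (q - ψ d / ℓ)).subset ?_⟩
  rintro _ ⟨x, hx, rfl⟩
  obtain ⟨l, hl, hlx⟩ := hpop h hh x
  obtain ⟨n, hn⟩ := hint _ (sub_mem_sub hx hq.1)
  refine ⟨x - l, ⟨sub_mem_sub hx hl.1, ?_⟩, ?_⟩
  · rwa [mem_closedBall_zero_iff, ← dist_eq_norm, dist_comm]
  have hψl : ψ (l - q) = 0 := hker (sub_mem_sub hl hq)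
  have hx : ℓ * (x - q) = n - ψ (x - l) := by
    rw [← hn, ← add_zero (ψ _), ← hψl, ← map_add, sub_add_sub_cancel, hψ, sub_sub_cancel]
  have hxq : x = q - ψ (x - l) / ℓ + n / ℓ := by
    field_simp
    linarith
  refine (toIcoMod_eq_toIcoMod hα).2 ?_
  rcases abs_choice ℓ with hpos | hneg
  · exact ⟨n, by rw [hpos, zsmul_eq_mul, ← div_eq_mul_inv]; linarith⟩
  · refine ⟨-n, ?_⟩
    rw [hneg, zsmul_eq_mul, ← div_eq_mul_inv, Int.cast_neg, neg_div_neg_eq]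
    linarith

end HasPopularDifferences

/-! ### Periodic structure of the measure -/

lemma IsPoissonPair.exists_hasPopularDifferences {a b : ℝ → ℂ} (hab : IsPoissonPair a b)
    (ha : UniformlyDiscreteR (support a)) (hD : LocFiniteR (support b - support b)) :
    ∃ R, HasPopularDifferences (support a) R := by
  obtain ⟨C, hC⟩ := hab.exists_norm_le ha
  have hspec := hab.spectrumIn_correlation ha
  obtain ⟨η, hη, hsep⟩ := ha
  obtain ⟨R, hR⟩ := exists_forall_nonempty_support_inter_closedBall hD hη
  refine ⟨R, ?_⟩
  rintro _ ⟨x, hx, y, hy, rfl⟩ z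
  have hsep (x : ℝ) (hx : a x ≠ 0) (y : ℝ) (hy : a y ≠ 0) (hxy : x ≠ y) := hsep x hx y hy hxy
  have hR := hR _ _ (hspec (x - y)) (norm_correlation_le hC (x - y))
    fun l hl k hk =>
      hsep l (support_correlation_subset _ _ hl) k (support_correlation_subset _ _ hk)
  rw [support_correlation] at hR
  exact hR ⟨y, hy, by simpa using hx⟩ z

lemma LocFiniteR.mono {A B : Set ℝ} (hB : LocFiniteR B) (hAB : A ⊆ B) : LocFiniteR A :=
  fun x r => (hB x r).subset (inter_subset_inter_left _ hAB)

lemma LocFiniteR.sub_finite {A F : Set ℝ} (hA : LocFiniteR A) (hF : F.Finite) :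
    LocFiniteR (A - F) := by
  intro x r
  refine (hF.biUnion fun t _ => (hA (x + t) r).image (· - t)).subset ?_
  rintro _ ⟨⟨l, hl, t, ht, rfl⟩, hdist⟩
  refine mem_biUnion ht ⟨l, ⟨hl, ?_⟩, rfl⟩
  rwa [mem_ball, Real.dist_eq, add_comm, ← sub_sub]

lemma locFiniteR_zmultiples (α : ℝ) : LocFiniteR (AddSubgroup.zmultiples α : Set ℝ) := by
  intro x r
  have hcofin := (AddSubgroup.tendsto_zmultiples_subtype_cofinite α)
    (isCompact_closedBall x r).compl_mem_cocompact
  refine ((mem_cofinite.1 hcofin).image Subtype.val).subset ?_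
  rintro t ⟨ht, hdist⟩
  exact ⟨⟨t, ht⟩, fun hfar => hfar (ball_subset_closedBall hdist), rfl⟩

lemma eq_zero_of_forall_sum_mul_pow_eq_zero {K : Type*} [CommRing K] [IsDomain K] {Y : Finset K}
    {C : K → K} (h : ∀ k < Y.card, ∑ y ∈ Y, C y * y ^ k = 0) {y : K} (hy : y ∈ Y) : C y = 0 := by
  let e := Y.equivFin.symm
  have hzero : (fun i => C (e i)) = 0 :=
    Matrix.eq_zero_of_forall_pow_sum_mul_pow_eq_zero (Subtype.val_injective.comp e.injective)
      fun i => by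
        rw [← h i i.2, ← Finset.sum_coe_sort Y, ← e.sum_comp]
        rfl
  simpa [e] using congrFun hzero (Y.equivFin ⟨y, hy⟩)

lemma e2piR_add_int_mul_inv {α : ℝ} (hα : α ≠ 0) (s : ℝ) (n : ℤ) :
    e2piR α (s + n * α⁻¹) = e2piR α s := by
  have hone : e2piR α⁻¹ α = 1 := by simp [e2piR, hα]
  rw [e2piR_add_right, e2piR_comm α (n * α⁻¹), e2piR_int_mul, hone, one_zpow, mul_one]

lemma IsPoissonPair.exists_forall_eq_tsum {a b : ℝ → ℂ} (hab : IsPoissonPair a b) {T : Set ℝ}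
    (hT : LocFiniteR (support a - T)) :
    ∃ w : 𝓢(ℝ, ℂ), ∀ x ∈ T, a x = ∑' s, b s * (e2piR x s * w s) := by
  obtain ⟨χ, hχ0, hχ⟩ := hT.exists_schwartz_isolating 0
  refine ⟨𝓕⁻ χ, fun x hx => ?_⟩
  have hoff (l : ℝ) (hl : l ≠ x) : a l * χ (l - x) = 0 := by
    rcases eq_or_ne (a l) 0 with hal | hal
    · rw [hal, zero_mul]
    · rw [hχ _ (sub_mem_sub hal hx) (sub_ne_zero.2 hl), mul_zero]
  rw [← hab.tsum_fourier_sub, FourierTransform.fourier_fourierInv_eq, tsum_eq_single _ hoff,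
    sub_self, hχ0, mul_one]

/- On the progression, `e(x s) = e(v s) e(α s)ⁿ`; group the terms by the value of `e(α s)`. -/
lemma IsPoissonPair.exists_eq_sum_mul_zpow {a b : ℝ → ℂ} (hab : IsPoissonPair a b) {α : ℝ}
    (hfin : (e2piR α '' support b).Finite) (v : ℝ) {N : Set ℤ}
    (hN : LocFiniteR (support a - (fun n : ℤ => v + n * α) '' N)) :
    ∃ C : ℂ → ℂ, ∀ n ∈ N, a (v + n * α) = ∑ y ∈ hfin.toFinset, C y * y ^ n := by
  classical
  obtain ⟨w, hw⟩ := hab.exists_forall_eq_tsum hN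
  let g (s : ℝ) : ℂ := b s * (e2piR v s * w s)
  have hg : Summable g := Summable.of_norm <| by simpa [g] using hab.summable_right w
  refine ⟨fun y => ∑' s, (e2piR α ⁻¹' {y}).indicator g s, fun n hn => ?_⟩
  have hgroup (s : ℝ) : b s * (e2piR (v + n * α) s * w s) =
      ∑ y ∈ hfin.toFinset, (e2piR α ⁻¹' {y}).indicator g s * y ^ n := by
    rcases eq_or_ne (b s) 0 with hbs | hbs
    · simp [g, indicator_apply, hbs]
    rw [Finset.sum_eq_single_of_mem _ (hfin.mem_toFinset.2 ⟨s, hbs, rfl⟩) fun y _ hy => by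
      rw [indicator_of_notMem (s := e2piR α ⁻¹' {y}) (Ne.symm hy), zero_mul],
      indicator_of_mem (s := e2piR α ⁻¹' {e2piR α s}) rfl, e2piR_add_left, e2piR_int_mul]
    ring
  simp only [hw _ (mem_image_of_mem _ hn), hgroup, ← tsum_mul_right]
  exact Summable.tsum_finsetSum fun y _ => (hg.indicator _).mul_right _

lemma finite_image_e2piR_inv_neg {α : ℝ} (hα : 0 < α) {A : Set ℝ}
    (hA : (toIcoMod hα 0 '' A).Finite) : (e2piR α⁻¹ '' (-A)).Finite := by
  refine (hA.image fun t => e2piR α⁻¹ (-t)).subset ?_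
  rintro _ ⟨x, hx, rfl⟩
  refine ⟨_, ⟨-x, hx, rfl⟩, ?_⟩
  have := e2piR_add_int_mul_inv (inv_ne_zero hα.ne') x (toIcoDiv hα 0 (-x))
  rw [inv_inv] at this
  beta_reduce
  rw [← self_sub_toIcoDiv_zsmul, neg_sub, sub_neg_eq_add, add_comm, zsmul_eq_mul, this]

/- With `d` exponentials in play, a nonzero value of `b` at `s` forces a nonzero value at one of `d`
consecutive points of the progression `s + ℤ/α`, by Vandermonde. -/
lemma IsPoissonPair.finite_image_e2piR {a b : ℝ → ℂ} (hab : IsPoissonPair a b)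
    (hb : UniformlyDiscreteR (support b)) {α : ℝ} (hα : 0 < α)
    (ha : (toIcoMod hα 0 '' support a).Finite) : (e2piR α '' support b).Finite := by
  have hY : (e2piR α⁻¹ '' support fun x => a (-x)).Finite := finite_image_e2piR_inv_neg hα ha
  set d := hY.toFinset.card
  have hα' : 0 < α⁻¹ := inv_pos.2 hα
  have hb := hb.locFiniteR
  refine ((hb.finite_inter_closedBall 0 ((d + 1) * α⁻¹)).image (e2piR α)).subset ?_
  rintro _ ⟨s, hs, rfl⟩
  set t := toIcoMod hα' 0 s
  set m := toIcoDiv hα' 0 s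
  have hst : t + m * α⁻¹ = s := by
    rw [← zsmul_eq_mul]
    exact toIcoMod_add_toIcoDiv_zsmul hα' 0 s
  have ht : t ∈ Ico 0 α⁻¹ := toIcoMod_mem_Ico' hα' s
  have hN : (insert m ((↑) '' Iio d) : Set ℤ).Finite := ((finite_Iio d).image _).insert m
  obtain ⟨C, hC⟩ := hab.dual.exists_eq_sum_mul_zpow hY t (hb.sub_finite (hN.image _))
  obtain ⟨k, hk, hbk⟩ : ∃ k < d, b (t + k * α⁻¹) ≠ 0 := by
    by_contra! hzero
    have hC0 {y : ℂ} (hy : y ∈ hY.toFinset) : C y = 0 :=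
      eq_zero_of_forall_sum_mul_pow_eq_zero (fun k hk => by
        simpa [hzero k hk] using (hC k (mem_insert_of_mem _ ⟨k, hk, rfl⟩)).symm) hy
    refine hs ?_
    rw [← hst, hC m (mem_insert _ _)]
    exact Finset.sum_eq_zero fun y hy => by rw [hC0 hy, zero_mul]
  refine ⟨t + k * α⁻¹, ⟨hbk, ?_⟩, ?_⟩
  · have : (k : ℝ) * α⁻¹ ≤ d * α⁻¹ := by gcongr
    have : 0 ≤ k * α⁻¹ := by positivity
    rw [mem_closedBall_zero_iff, Real.norm_eq_abs, abs_of_nonneg (add_nonneg ht.1 this)]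
    linarith [ht.2]
  · rw [← hst, e2piR_add_int_mul_inv hα.ne']
    exact_mod_cast e2piR_add_int_mul_inv hα.ne' t k

lemma isTrigPolyR_sum {ι : Type*} (s : Finset ι) (c : ι → ℂ) (w : ι → ℝ) :
    IsTrigPolyR fun x => ∑ i ∈ s, c i * e2piR x (w i) := by
  let e := s.equivFin.symm
  refine ⟨s.card, fun i => c (e i), fun i => w (e i), fun x => ?_⟩
  exact (Finset.sum_coe_sort s fun i => c i * e2piR x (w i)).symm.trans (e.sum_comp _).symm

lemma IsPoissonPair.exists_isTrigPolyR {a b : ℝ → ℂ} (hab : IsPoissonPair a b) {α : ℝ} (hα : 0 < α)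
    (ha : (toIcoMod hα 0 '' support a).Finite) (hb : (e2piR α '' support b).Finite) (v : ℝ) :
    ∃ p, IsTrigPolyR p ∧ ∀ n : ℤ, a (v + n * α) = p (v + n * α) := by
  have hD : LocFiniteR (support a - (fun n : ℤ => v + n * α) '' univ) := by
    refine ((locFiniteR_zmultiples α).sub_finite (ha.image (v - ·))).mono ?_
    rintro _ ⟨x, hx, _, ⟨n, -, rfl⟩, rfl⟩
    refine ⟨(toIcoDiv hα 0 x - n) • α, ⟨_, rfl⟩, _, ⟨_, ⟨x, hx, rfl⟩, rfl⟩, ?_⟩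
    rw [← self_sub_toIcoDiv_zsmul]
    simp only [zsmul_eq_mul, Int.cast_sub]
    ring
  obtain ⟨C, hC⟩ := hab.exists_eq_sum_mul_zpow hb v hD
  have hfreq : ∀ y ∈ hb.toFinset, ∃ w, e2piR α w = y := fun y hy => by
    obtain ⟨w, -, hw⟩ := hb.mem_toFinset.1 hy
    exact ⟨w, hw⟩
  choose! w hw using hfreq
  refine ⟨_, isTrigPolyR_sum hb.toFinset (fun y => C y * e2piR (-v) (w y)) w, fun n => ?_⟩
  rw [hC n (mem_univ n)]
  refine Finset.sum_congr rfl fun y hy => ?_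
  rw [mul_assoc, ← e2piR_add_left, neg_add_cancel_left, e2piR_int_mul, hw y hy]

lemma exists_eq_sum_indicator {a : ℝ → ℂ} {α : ℝ} (hα : 0 < α)
    (ha : (toIcoMod hα 0 '' support a).Finite) {p : ℝ → ℝ → ℂ}
    (hp : ∀ v, ∀ n : ℤ, a (v + n * α) = p v (v + n * α)) :
    ∃ (J : ℕ) (v : Fin J → ℝ),
      (∀ x, a x = ∑ j, {y | ∃ n : ℤ, y = v j + α * n}.indicator (p (v j)) x) ∧
      support a ⊆ ⋃ j, {y | ∃ n : ℤ, y = v j + α * n} := by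
  classical
  let e := ha.toFinset.equivFin.symm
  have hclass (x : ℝ) (j) : (∃ n : ℤ, x = e j + α * n) ↔ toIcoMod hα 0 x = e j := by
    obtain ⟨y, -, hy⟩ := ha.mem_toFinset.1 (e j).2
    have hmem : (e j : ℝ) ∈ Ico 0 (0 + α) := by
      rw [← hy]
      exact toIcoMod_mem_Ico hα 0 y
    simp only [toIcoMod_eq_iff, hmem, true_and, zsmul_eq_mul, mul_comm α]
  refine ⟨_, fun j => e j, fun x => ?_, fun x hx => ?_⟩
  · have hsum : ∑ j, {y | ∃ n : ℤ, y = e j + α * n}.indicator (p (e j)) x =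
        ∑ v ∈ ha.toFinset, if toIcoMod hα 0 x = v then p v x else 0 := by
      simp only [indicator_apply, mem_ofPred_eq, hclass]
      exact (e.sum_comp fun v => if toIcoMod hα 0 x = v then p v x else 0).trans
        (Finset.sum_coe_sort _ fun v => if toIcoMod hα 0 x = v then p v x else 0)
    rw [hsum, Finset.sum_ite_eq]
    split_ifs with hx
    · have := hp (toIcoMod hα 0 x) (toIcoDiv hα 0 x)
      rwa [← zsmul_eq_mul, toIcoMod_add_toIcoDiv_zsmul] at this
    · by_contra hax
      exact hx (ha.mem_toFinset.2 ⟨x, hax, rfl⟩)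
  · refine mem_iUnion.2 ⟨e.symm ⟨_, ha.mem_toFinset.2 ⟨x, hx, rfl⟩⟩, (hclass x _).2 ?_⟩
    rw [e.apply_symm_apply]

lemma UniformlyDiscreteR.neg {A : Set ℝ} (hA : UniformlyDiscreteR A) :
    UniformlyDiscreteR (-A) := by
  obtain ⟨η, hη, hsep⟩ := hA
  refine ⟨η, hη, fun x hx y hy hxy => ?_⟩
  rw [← dist_neg_neg]
  exact hsep _ hx _ hy (neg_injective.ne hxy)

lemma RepMeasureR.isPoissonPair {a b : ℝ → ℂ} {f : TemperedDistR} (ha : RepMeasureR a f)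
    (hb : RepMeasureR b (fourierTDR f)) : IsPoissonPair a b where
  summable_left := ha.2.1
  summable_right := hb.2.1
  tsum_fourier φ := (ha.2.2 (𝓕 φ)).symm.trans (hb.2.2 φ)

/-- (Theorem 1, Lev–Olevskii.) Let `μ` be a crystalline
measure on `ℝ` with uniformly discrete support and spectrum. Then there are a
lattice `L = αℤ`, `α > 0`, points `λ_1, …, λ_J ∈ ℝ` and trigonometric
polynomials `P_1, …, P_J` such that `μ = Σ_j Σ_{λ ∈ λ_j + L} P_j(λ) δ_λ`; in
particular `supp μ` is contained in a finite union of translates of `L`. -/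
theorem statement15 (a b : ℝ → ℂ) (f : TemperedDistR)
    (hrep : RepMeasureR a f) (hrepF : RepMeasureR b (fourierTDR f))
    (hlfa : LocFiniteR {x | a x ≠ 0}) (hlfb : LocFiniteR {x | b x ≠ 0})
    (huda : UniformlyDiscreteR {x | a x ≠ 0})
    (hudb : UniformlyDiscreteR {x | b x ≠ 0}) :
    ∃ α : ℝ, 0 < α ∧
      ∃ (J : ℕ) (v : Fin J → ℝ) (P : Fin J → ℝ → ℂ),
        (∀ j, IsTrigPolyR (P j)) ∧
        (∀ x : ℝ, a x =
          ∑ j, Set.indicator {y : ℝ | ∃ n : ℤ, y = v j + α * n} (P j) x) ∧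
        {x | a x ≠ 0} ⊆ ⋃ j, {y : ℝ | ∃ n : ℤ, y = v j + α * n} := by
  have hab : IsPoissonPair a b := hrep.isPoissonPair hrepF
  have hdiff_a : LocFiniteR (support a - support a) := hab.locFiniteR_sub huda hudb
  have hdiff_b : LocFiniteR (support b - support b) :=
    hab.dual.locFiniteR_sub hudb huda.neg
  obtain ⟨R, hpop⟩ := hab.exists_hasPopularDifferences huda hdiff_b
  obtain ⟨α, hα, hfin_a⟩ := hpop.exists_finite_image_toIcoMod hdiff_a
  have hfin_b : (e2piR α '' support b).Finite := hab.finite_image_e2piR hudb hα hfin_a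
  choose p hp_trig hp using hab.exists_isTrigPolyR hα hfin_a hfin_b
  obtain ⟨J, v, hsum, hsupp⟩ := exists_eq_sum_indicator hα hfin_a hp
  exact ⟨α, hα, J, v, fun j => p (v j), fun j => hp_trig (v j), hsum, hsupp⟩
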